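/- arXiv:1206.5569 — 13 statements merged into one kernel-verified Lean document; each statement's English description precedes it below -/
import Mathlib

section
/- Let G be a finite group of order v and S ⊆ G with |S| = k. Consider the three conditions: (i) S is a (v,k,λ) difference set; (ii) S is a (v,k,μ) sum set; (iii) S = S^{(-1)}. Then any two of these conditions imply the third; more precisely: if S is both a (v,k,λ) difference set and a (v,k,μ) sum set, then S = S^{(-1)}; if S is a (v,k,λ) difference set with S = S^{(-1)}, then S is a (v,k,λ) sum set; and if S is a (v,k,μ) sum set with S = S^{(-1)}, then S is a (v,k,μ) difference set. -/
/-!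
Let `n = k - λ` and `m = |S ∩ S⁻¹| - μ`. In the group ring, with `T = S⁻¹` and `G` the sum of all group elements, the difference set condition is
`S T = n + λ G` and the sum set condition is `S S = m + μ G`. Evaluating `S S T` by associativity
in the two ways (`triple_diff`, `triple_sum`) gives `n S + λ k G = m T + μ k G`.

If some `x ∈ S` had `x⁻¹ ∉ S`, comparing the coefficients at `x`, `x⁻¹` and `1` (which lies in
both or neither of `S`, `T`) forces `n = 0`. Then every nonidentity `h` has `k` representations
`h = x y⁻¹`, that is `h⁻¹ S = S`; for `h = x ^ 2` this puts `x⁻¹` in `S`, a contradiction.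

The other two implications hold because the two counts agree when `S⁻¹ = S`.
-/

open scoped Pointwise

/-- The number of ways to write `g` as a product of two elements of `S`. -/
noncomputable def sumReps {G : Type*} [Group G] (S : Set G) (g : G) : ℕ :=
  Set.ncard {p : G × G | p.1 ∈ S ∧ p.2 ∈ S ∧ p.1 * p.2 = g}

/-- The number of ways to write `g` as a quotient `x * y⁻¹` of two elements of `S`. -/
noncomputable def diffReps {G : Type*} [Group G] (S : Set G) (g : G) : ℕ :=
  Set.ncard {p : G × G | p.1 ∈ S ∧ p.2 ∈ S ∧ p.1 * p.2⁻¹ = g}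

/-- `S` is a `(v,k,μ)` sum set: every nonidentity element of `G` has exactly `μ`
representations as a product of two elements of `S`. -/
def IsSumSet {G : Type*} [Group G] (S : Set G) (mu : ℕ) : Prop :=
  ∀ g : G, g ≠ 1 → sumReps S g = mu

/-- `S` is a `(v,k,λ)` difference set: every nonidentity element of `G` has exactly `λ`
representations as `x * y⁻¹` with `x, y ∈ S`. -/
def IsDiffSet {G : Type*} [Group G] (S : Set G) (lam : ℕ) : Prop :=
  ∀ g : G, g ≠ 1 → diffReps S g = lam


/-- The integer-valued indicator function of `S`. -/
noncomputable def charFn {G : Type*} (S : Set G) : G → ℤ := S.indicator 1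

section

variable {G : Type*}

open Classical in
lemma charFn_eq (S : Set G) (x : G) : charFn S x = if x ∈ S then 1 else 0 := by
  simp [charFn, Set.indicator_apply]

lemma ncard_and_eq_sum [Fintype G] (S : Set G) (φ : G → G) :
    (({x | x ∈ S ∧ φ x ∈ S} : Set G).ncard : ℤ) = ∑ x, charFn S x * charFn S (φ x) := by
  classical
  rw [Set.ncard_eq_toFinset_card', Set.toFinset_ofPred, Finset.card_filter]
  push_cast
  refine Finset.sum_congr rfl fun x _ => ?_
  simp only [charFn_eq]
  split_ifs <;> simp_all

variable [Group G] [Fintype G]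

lemma sumReps_eq_sum (S : Set G) (g : G) :
    (sumReps S g : ℤ) = ∑ x, charFn S x * charFn S (x⁻¹ * g) := by
  rw [← ncard_and_eq_sum, sumReps,
    ← Set.ncard_image_of_injective (f := fun x : G => (x, x⁻¹ * g)) _
      (fun a b h => (Prod.ext_iff.1 h).1)]
  congr 2
  ext ⟨a, b⟩
  simp only [Set.mem_ofPred_eq, Set.mem_image, Prod.mk.injEq]
  constructor
  · rintro ⟨ha, hb, rfl⟩
    exact ⟨a, by simpa using ⟨ha, hb⟩, rfl, by group⟩
  · rintro ⟨x, ⟨h1, h2⟩, rfl, rfl⟩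
    exact ⟨h1, h2, by group⟩

lemma diffReps_eq_sum (S : Set G) (g : G) :
    (diffReps S g : ℤ) = ∑ x, charFn S x * charFn S (g⁻¹ * x) := by
  rw [← ncard_and_eq_sum, diffReps,
    ← Set.ncard_image_of_injective (f := fun x : G => (x, g⁻¹ * x)) _
      (fun a b h => (Prod.ext_iff.1 h).1)]
  congr 2
  ext ⟨a, b⟩
  simp only [Set.mem_ofPred_eq, Set.mem_image, Prod.mk.injEq]
  constructor
  · rintro ⟨ha, hb, rfl⟩
    exact ⟨a, by simpa using ⟨ha, hb⟩, rfl, by group⟩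
  · rintro ⟨x, ⟨h1, h2⟩, rfl, rfl⟩
    exact ⟨h1, h2, by group⟩

lemma sumReps_eq_diffReps (S : Set G) (hS : S⁻¹ = S) (g : G) : sumReps S g = diffReps S g := by
  have hinv : ∀ x, charFn S x⁻¹ = charFn S x := fun x => by
    rw [charFn_eq, charFn_eq, ← Set.mem_inv, hS]
  zify
  rw [sumReps_eq_sum, diffReps_eq_sum]
  refine Finset.sum_congr rfl fun x _ => ?_
  rw [← hinv (x⁻¹ * g)]
  simp

lemma diffReps_one (S : Set G) : (diffReps S 1 : ℤ) = ∑ x, charFn S x := by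
  rw [diffReps_eq_sum]
  refine Finset.sum_congr rfl fun x _ => ?_
  simp [charFn_eq]

/-- The coefficient of `g` in `S (S T)`, for a difference set `S`. -/
lemma triple_diff {S : Set G} {lam : ℕ} (h : IsDiffSet S lam) (g : G) :
    ∑ x, ∑ y, charFn S x * charFn S y * charFn S (g⁻¹ * x * y) =
      lam * ∑ x, charFn S x + (∑ x, charFn S x - lam) * charFn S g := by
  classical
  have hd : ∀ u : G, (diffReps S u : ℤ) =
      lam + (if u = 1 then ∑ x, charFn S x - lam else 0) := by
    intro u
    split_ifs with hu
    · rw [hu, diffReps_one]; ring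
    · rw [h u hu]; simp
  calc _ = ∑ x, charFn S x * (diffReps S (x⁻¹ * g) : ℤ) := by
        refine Finset.sum_congr rfl fun x _ => ?_
        rw [diffReps_eq_sum, Finset.mul_sum]
        refine Finset.sum_congr rfl fun y _ => ?_
        simp [mul_assoc]
    _ = _ := by
        simp only [hd, mul_add, Finset.sum_add_distrib, inv_mul_eq_one, mul_ite, mul_zero,
          Finset.sum_ite_eq', Finset.mem_univ, if_true, ← Finset.sum_mul]
        ring

/-- The coefficient of `g` in `(S S) T`, for a sum set `S`. -/
lemma triple_sum {S : Set G} {mu : ℕ} (h : IsSumSet S mu) (g : G) :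
    ∑ x, ∑ y, charFn S x * charFn S y * charFn S (g⁻¹ * x * y) =
      mu * ∑ x, charFn S x + (sumReps S 1 - mu) * charFn S g⁻¹ := by
  classical
  generalize hc : (sumReps S 1 : ℤ) = c
  have hd : ∀ u : G, (sumReps S u : ℤ) =
      mu + (if u = 1 then c - mu else 0) := by
    intro u
    split_ifs with hu
    · rw [hu, hc]; ring
    · rw [h u hu]; simp
  calc _ = ∑ x, ∑ w, charFn S x * charFn S (x⁻¹ * w) * charFn S (g⁻¹ * w) := by
        refine Finset.sum_congr rfl fun x _ => ?_
        -- substitute `w = x * y`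
        refine Fintype.sum_equiv (Equiv.mulLeft x) _ _ fun y => ?_
        simp [mul_assoc]
    _ = ∑ w, (sumReps S w : ℤ) * charFn S (g⁻¹ * w) := by
        rw [Finset.sum_comm]
        refine Finset.sum_congr rfl fun w _ => ?_
        rw [sumReps_eq_sum, Finset.sum_mul]
    _ = _ := by
        have hs : ∑ w, charFn S (g⁻¹ * w) = ∑ w, charFn S w :=
          Fintype.sum_equiv (Equiv.mulLeft g⁻¹) _ _ fun _ => rfl
        simp_rw [hd, add_mul, Finset.sum_add_distrib, ← Finset.mul_sum, hs, ite_mul,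
          zero_mul]
        simp

lemma inv_mem_of_diff_sum {S : Set G} {lam mu : ℕ} (hd : IsDiffSet S lam) (hs : IsSumSet S mu)
    {x : G} (hx : x ∈ S) : x⁻¹ ∈ S := by
  by_contra hx'
  have key := fun g => (triple_diff hd g).symm.trans (triple_sum hs g)
  have fx : charFn S x = 1 := by simp [charFn_eq, hx]
  have fx' : charFn S x⁻¹ = 0 := by simp [charFn_eq, hx']
  have e1 := key x
  have e2 := key x⁻¹
  have e3 := key 1
  rw [inv_inv] at e2
  rw [inv_one] at e3
  rw [fx, fx'] at e1 e2
  have hn : ∑ y, charFn S y = (lam : ℤ) := by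
    by_cases h1 : (1 : G) ∈ S
    · have f1 : charFn S (1 : G) = 1 := by simp [charFn_eq, h1]
      rw [f1] at e3
      linarith
    · have f1 : charFn S (1 : G) = 0 := by simp [charFn_eq, h1]
      rw [f1] at e3
      linarith
  have hne : x * x ≠ 1 := fun h => hx' (by rwa [← eq_inv_of_mul_eq_one_left h])
  have hc := diffReps_eq_sum S (x * x)
  rw [hd _ hne, ← hn] at hc
  -- The sum attains its termwise upper bound, but the term at `x` is strictly smaller.
  refine (Finset.sum_lt_sum (fun y _ => ?_) ⟨x, Finset.mem_univ x, ?_⟩).ne' hc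
  · simp only [charFn_eq]
    split_ifs <;> simp
  · have : (x * x)⁻¹ * x = x⁻¹ := by group
    rw [this, fx, fx']
    simp

end

theorem stmt_0 {G : Type*} [Group G] [Finite G]
    (S : Set G) (v k lam mu : ℕ) (hv : Nat.card G = v) (hk : S.ncard = k) :
    (IsDiffSet S lam → IsSumSet S mu → S⁻¹ = S) ∧
    (IsDiffSet S lam → S⁻¹ = S → IsSumSet S lam) ∧
    (IsSumSet S mu → S⁻¹ = S → IsDiffSet S mu) := by
  have := Fintype.ofFinite G
  refine ⟨fun hd hs => ?_, fun hd hS g hg => ?_, fun hs hS g hg => ?_⟩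
  · ext x
    rw [Set.mem_inv]
    exact ⟨fun h => by simpa using inv_mem_of_diff_sum hd hs h, inv_mem_of_diff_sum hd hs⟩
  · rw [sumReps_eq_diffReps S hS, hd g hg]
  · rw [← sumReps_eq_diffReps S hS, hs g hg]
end

section
/- Let G be a finite abelian group of order v and let S ⊆ G be a (v,k,μ) sum set with 2 ≤ k ≤ v − 2. Then μ is even. -/
/-!
Swapping the two factors is an involution on the representations `g = x * y`, since `G` is
commutative, and its fixed points are the `x ∈ S` with `x * x = g`. So if `mu` were odd, every
nonidentity element would be the square of an element of `S`. Squaring would then be surjective on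
the finite set `G`, hence injective, and every nonidentity `x` would itself be the element of `S`
whose square is `x * x`. Thus `S` would miss at most the identity, contradicting `k ≤ v - 2`.
-/

open scoped Pointwise

/-- `S` is a `(v,k,λ,μ)` partial sum set: every nonidentity element of `S` has exactly `λ`
representations as a product of two elements of `S`, and every nonidentity element outside
`S` has exactly `μ` such representations. -/
def IsPartialSumSet {G : Type*} [Group G] (S : Set G) (lam mu : ℕ) : Prop :=
  (∀ g ∈ S, g ≠ 1 → sumReps S g = lam) ∧ (∀ g : G, g ∉ S → g ≠ 1 → sumReps S g = mu)

theorem exists_mul_self_of_odd_sumReps {G : Type*} [CommGroup G] [Finite G] (S : Set G) (g : G)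
    (h : ¬ Even (sumReps S g)) : ∃ x ∈ S, x * x = g := by
  by_contra! hx
  apply h
  have hf : {p : G × G | p.1 ∈ S ∧ p.2 ∈ S ∧ p.1 * p.2 = g}.Finite := Set.toFinite _
  rw [sumReps, Set.ncard_eq_toFinset_card _ hf, ← ZMod.natCast_eq_zero_iff_even,
    Finset.cast_card]
  refine Finset.sum_involution (fun p _ => p.swap) ?_ ?_ ?_ ?_
  · intro p hp
    decide
  · rintro ⟨a, b⟩ hp - hab
    simp only [Set.Finite.mem_toFinset, Set.mem_setOf_eq] at hp
    obtain ⟨ha, hb, he⟩ := hp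
    obtain rfl : b = a := congrArg Prod.fst hab
    exact hx b ha he
  · rintro ⟨a, b⟩ hp
    simp only [Set.Finite.mem_toFinset, Set.mem_setOf_eq, Prod.swap] at hp ⊢
    exact ⟨hp.2.1, hp.1, by rw [mul_comm]; exact hp.2.2⟩
  · intro p hp
    exact p.swap_swap

theorem stmt_1 {G : Type*} [CommGroup G] [Finite G] (S : Set G) (mu : ℕ)
    (h : IsSumSet S mu) (h1 : 2 ≤ S.ncard) (h2 : S.ncard ≤ Nat.card G - 2) :
    Even mu := by
  by_contra hodd
  have key : ∀ g : G, g ≠ 1 → ∃ x ∈ S, x * x = g := fun g hg =>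
    exists_mul_self_of_odd_sumReps S g (by rwa [h g hg])
  have hsurj : Function.Surjective (fun x : G => x * x) := by
    intro g
    by_cases hg : g = 1
    · exact ⟨1, by simp [hg]⟩
    · obtain ⟨x, -, hx⟩ := key g hg
      exact ⟨x, hx⟩
  have hinj : Function.Injective (fun x : G => x * x) := Finite.injective_iff_surjective.2 hsurj
  have hsub : Sᶜ ⊆ {1} := by
    intro x hxS
    by_contra hx1
    have hxx : x * x ≠ 1 := fun he => hx1 (hinj (by simpa using he))
    obtain ⟨y, hy, he⟩ := key _ hxx
    exact hxS (hinj he ▸ hy)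
  have hc := Set.ncard_le_ncard hsub (Set.toFinite _)
  rw [Set.ncard_singleton] at hc
  have := Set.ncard_add_ncard_compl S
  omega
end

section
/- Let G be a finite abelian group of odd order v. Then G admits no nontrivial sum set; that is, there is no subset S ⊆ G with 2 ≤ |S| ≤ v − 2 that is a (v,|S|,μ) sum set for some μ. -/
/-!
In an abelian group the swap `(x, y) ↦ (y, x)` acts on the representations `g = x * y` with
`x, y ∈ S`, and its fixed points are the `(h, h)` with `h ∈ S` and `h * h = g`. In odd order
every square has a unique square root, so `sumReps S (h * h)` is odd exactly when `h ∈ S`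
(`odd_sumReps_mul_self`). If all nonidentity elements have the same number of representations,
its parity therefore forces `S` to contain either all nonidentity elements or none of them.
-/

open scoped Pointwise

theorem mul_self_injective_of_odd {G : Type*} [CommGroup G]
    (hodd : Odd (Nat.card G)) : Function.Injective (fun x : G => x * x) := by
  have h := (powCoprime (G := G) (n := 2) hodd.coprime_two_right).injective
  intro a b hab
  apply h
  simpa [powCoprime, pow_two] using hab

/-- Off-diagonal representations of `h * h` cancel in pairs under the swap, and the only possible
diagonal one is `(h, h)`. -/
theorem odd_sumReps_mul_self {G : Type*} [CommGroup G] [Finite G]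
    (hodd : Odd (Nat.card G)) (S : Set G) (h : G) : Odd (sumReps S (h * h)) ↔ h ∈ S := by
  classical
  have := Fintype.ofFinite G
  set T : Finset (G × G) :=
    Finset.univ.filter (fun p => p.1 ∈ S ∧ p.2 ∈ S ∧ p.1 * p.2 = h * h) with hT
  have hcard : sumReps S (h * h) = T.card := by
    rw [sumReps, ← Set.ncard_coe_finset]
    congr 1
    ext p
    simp [hT]
  have hsplit := T.card_filter_add_card_filter_not (fun p => p.1 = p.2)
  have hoff : Even (T.filter (fun p => ¬ p.1 = p.2)).card := by
    rw [← ZMod.natCast_eq_zero_iff_even, Finset.cast_card]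
    refine Finset.sum_involution (fun p _ => p.swap) ?_ ?_ ?_ ?_
    · intro p _
      decide
    · rintro ⟨x, y⟩ hp _ heq
      simp only [Finset.mem_filter] at hp
      exact hp.2 (Prod.ext_iff.1 heq).2
    · rintro ⟨x, y⟩ hp
      simp only [hT, Finset.mem_filter, Finset.mem_univ, true_and, Prod.swap] at hp ⊢
      exact ⟨⟨hp.1.2.1, hp.1.1, by rw [mul_comm]; exact hp.1.2.2⟩, fun e => hp.2 e.symm⟩
    · rintro ⟨x, y⟩ _
      rfl
  have hdiag : T.filter (fun p => p.1 = p.2) = if h ∈ S then {(h, h)} else ∅ := by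
    ext ⟨x, y⟩
    have hroot : x * x = h * h → x = h := fun e => mul_self_injective_of_odd hodd e
    split_ifs with hS <;>
      simp only [hT, Finset.mem_filter, Finset.mem_univ, true_and, Finset.mem_singleton,
        Prod.mk.injEq, Finset.notMem_empty, iff_false]
    · constructor
      · rintro ⟨⟨_, _, e⟩, rfl⟩
        exact ⟨hroot e, hroot e⟩
      · rintro ⟨rfl, rfl⟩
        exact ⟨⟨hS, hS, rfl⟩, rfl⟩
    · rintro ⟨⟨hx, _, e⟩, rfl⟩
      exact hS (hroot e ▸ hx)
  rw [hcard, ← hsplit, Nat.odd_add, iff_true_right hoff, hdiag]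
  split_ifs with hS <;> simp [hS]

theorem stmt_2 {G : Type*} [CommGroup G] [Finite G] (hodd : Odd (Nat.card G)) :
    ¬ ∃ (S : Set G) (mu : ℕ), 2 ≤ S.ncard ∧ S.ncard ≤ Nat.card G - 2 ∧ IsSumSet S mu := by
  rintro ⟨S, mu, h2, hv, hS⟩
  have key : ∀ h : G, h ≠ 1 → (Odd mu ↔ h ∈ S) := by
    intro h hh
    have hne : h * h ≠ 1 := fun e => hh (mul_self_injective_of_odd hodd (by simpa using e))
    rw [← hS _ hne]
    exact odd_sumReps_mul_self hodd S h
  by_cases hmu : Odd mu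
  · have hsub : ({1}ᶜ : Set G) ⊆ S := fun h hh => (key h hh).1 hmu
    have hle := Set.ncard_le_ncard hsub (Set.toFinite S)
    rw [Set.ncard_compl, Set.ncard_singleton] at hle
    omega
  · have hsub : S ⊆ {1} := fun h hh => by
      by_contra hne
      exact hmu ((key h hne).2 hh)
    have hle := Set.ncard_le_ncard hsub
    rw [Set.ncard_singleton] at hle
    omega
end

section
/- Let G be a finite group of order v, let N be a normal subgroup of G, and let S ⊆ G be a (v,k,μ) sum set. If the center of the quotient group G/N contains an element β that is not a square in G/N (i.e., there is no x ∈ G/N with x² = β), then μ·|N| is even. -/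
/-!
Count the pairs `(a, b) ∈ S × S` whose product lies in the coset `beta`. Since `beta` is not a
square, it is not the trivial coset, so each of its `|N|` elements has exactly `mu`
representations and the count is `mu * |N|`. Since `beta` is central, swapping `a` and `b`
preserves this set of pairs, and a fixed pair `(a, a)` would make `beta` a square. Hence the
swap is a fixed-point-free involution and the count is even.
-/

open scoped Pointwise

theorem stmt_3 {G : Type*} [Group G] [Finite G] (N : Subgroup G) [N.Normal]
    (S : Set G) (mu : ℕ) (h : IsSumSet S mu)
    (beta : G ⧸ N) (hbeta : beta ∈ Subgroup.center (G ⧸ N))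
    (hsq : ∀ x : G ⧸ N, x ^ 2 ≠ beta) :
    Even (mu * Nat.card N) := by
  classical
  have := Fintype.ofFinite G
  set π := QuotientGroup.mk' N with hπ
  let T : Finset (G × G) := {p | p.1 ∈ S ∧ p.2 ∈ S ∧ π (p.1 * p.2) = beta}
  let C : Finset G := {g | π g = beta}
  have hC : C.card = Nat.card N := by
    obtain ⟨b, rfl⟩ := QuotientGroup.mk'_surjective N beta
    rw [← SetLike.coe_sort_coe, Nat.card_coe_set_eq, ← Set.ncard_coe_finset,
      ← Set.ncard_image_of_injective (N : Set G) (mul_right_injective b)]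
    congr 1
    ext g
    simp only [C, hπ, Finset.coe_filter, Finset.mem_univ, true_and, Set.mem_ofPred_eq,
      QuotientGroup.mk'_apply, Set.mem_image, SetLike.mem_coe]
    rw [eq_comm, QuotientGroup.eq]
    exact ⟨fun hg => ⟨_, hg, by group⟩, by rintro ⟨n, hn, rfl⟩; simpa using hn⟩
  have hT : T.card = mu * Nat.card N := by
    rw [Finset.card_eq_sum_card_fiberwise (f := fun p : G × G => p.1 * p.2) (t := C)
      (by intro p hp; simp_all [T, C]), Finset.sum_const_nat (m := mu), hC, mul_comm]
    intro g hg
    have hgβ : π g = beta := by simpa [C] using hg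
    -- `beta ≠ 1` because `1 = 1 ^ 2` is a square, so the coset `beta` avoids the identity.
    have hg1 : g ≠ 1 := by
      rintro rfl
      exact hsq 1 (by rw [one_pow, ← hgβ, map_one])
    rw [← h g hg1, sumReps, ← Set.ncard_coe_finset]
    congr 1
    ext p
    simp only [T, Finset.coe_filter, Finset.mem_filter, Finset.mem_univ, true_and,
      Set.mem_ofPred_eq]
    exact ⟨fun ⟨⟨h1, h2, _⟩, h3⟩ => ⟨h1, h2, h3⟩,
      fun ⟨h1, h2, h3⟩ => ⟨⟨h1, h2, h3 ▸ hgβ⟩, h3⟩⟩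
  rw [← hT, ← ZMod.natCast_eq_zero_iff_even, Finset.card_eq_sum_ones, Nat.cast_sum]
  refine Finset.sum_involution (fun p _ => p.swap) (fun p _ => by decide) ?_ ?_
    (fun p _ => p.swap_swap)
  · intro p hp _ hfix
    have h12 : p.2 = p.1 := congrArg Prod.fst hfix
    have hp' : π (p.1 * p.2) = beta := (Finset.mem_filter.1 hp).2.2.2
    exact hsq (π p.1) (by rw [← hp', h12, map_mul, pow_two])
  · intro p hp
    obtain ⟨h1, h2, h3⟩ := (Finset.mem_filter.1 hp).2
    refine Finset.mem_filter.2 ⟨Finset.mem_univ _, h2, h1, ?_⟩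
    have hc := Subgroup.mem_center_iff.1 hbeta (π p.1)
    rw [map_mul] at h3
    -- Centrality of `beta = xy` gives `x(xy) = (xy)x`, hence `yx = xy`.
    rw [← h3, mul_assoc] at hc
    rw [Prod.fst_swap, Prod.snd_swap, map_mul, ← h3]
    exact (mul_left_cancel hc).symm
end

section
/- Let G be a finite group of order v admitting a normal subgroup N of index 2, and let S ⊆ G be a (v,k,μ) sum set. Then n = k² − μv is a perfect square (there exists an integer s with n = s²). Moreover, if k is odd, then n is a nonzero perfect square. -/
/-!
A group homomorphism into the multiplicative monoid of `ℤ` turns the sum set equation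
`S · S = (a - μ) · 1 + μ · G` in the group ring (`a` being the number of representations of the
identity) into `c(S)² = a - μ + μ · c(G)`; this is `sq_sum_eq_of_isSumSet`. The trivial character
gives `k² - μv = a - μ`, while the sign character `χ` with kernel `N` satisfies `χ(G) = 0` and so
gives `χ(S)² = a - μ`. Hence `k² - μv = χ(S)²`. As `χ` takes the values `±1`, `χ(S)` has the
same parity as `k`, so it is odd, and in particular nonzero, when `k` is odd.
-/

open scoped Pointwise

/-- The character of order two whose kernel is the index-two subgroup `N`, with values in `ℤ`. -/
noncomputable def signChar {G : Type*} [Group G] (N : Subgroup G) (hidx : N.index = 2) :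
    G →* ℤ := by
  classical
  exact
    { toFun := fun g => if g ∈ N then 1 else -1
      map_one' := by simp [N.one_mem]
      map_mul' := fun a b => by
        have := Subgroup.mul_mem_iff_of_index_two hidx (a := a) (b := b)
        by_cases ha : a ∈ N <;> by_cases hb : b ∈ N <;> simp_all }

theorem signChar_of_mem {G : Type*} [Group G] (N : Subgroup G) (hidx : N.index = 2) {g : G}
    (hg : g ∈ N) : signChar N hidx g = 1 := by
  simp [signChar, hg]

theorem signChar_of_notMem {G : Type*} [Group G] (N : Subgroup G) (hidx : N.index = 2) {g : G}
    (hg : g ∉ N) : signChar N hidx g = -1 := by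
  simp [signChar, hg]

theorem sum_signChar {G : Type*} [Group G] [Fintype G] (N : Subgroup G) (hidx : N.index = 2) :
    ∑ g, signChar N hidx g = 0 := by
  obtain ⟨a, ha⟩ : ∃ a, a ∉ N := by
    by_contra! hN
    have htop : N = ⊤ := (Subgroup.eq_top_iff' N).2 hN
    simp [htop] at hidx
  -- Translation by an element outside `N` changes the sign of every term.
  have key : ∑ g, signChar N hidx (a * g) = ∑ g, signChar N hidx g :=
    Equiv.sum_comp (Equiv.mulLeft a) (fun g => signChar N hidx g)
  simp only [map_mul, signChar_of_notMem N hidx ha, neg_one_mul, Finset.sum_neg_distrib] at key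
  linarith

/-- The image of the group ring identity `S · S = ∑ g, sumReps S g · g` under a character. -/
theorem sq_sum_eq_sum_sumReps {G : Type*} [Group G] [Fintype G] (T : Finset G) (c : G →* ℤ) :
    (∑ x ∈ T, c x) ^ 2 = ∑ g, (sumReps (T : Set G) g : ℤ) * c g := by
  classical
  rw [sq, Finset.sum_mul_sum, ← Finset.sum_product',
    ← Finset.sum_fiberwise (T ×ˢ T) (fun p : G × G => p.1 * p.2)]
  refine Finset.sum_congr rfl fun g _ => ?_
  have hcard : sumReps (T : Set G) g = ((T ×ˢ T).filter fun p => p.1 * p.2 = g).card := by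
    rw [sumReps, ← Set.ncard_coe_finset]
    congr 1
    ext p
    simp [and_assoc]
  rw [hcard, ← nsmul_eq_mul]
  refine Finset.sum_eq_card_nsmul fun p hp => ?_
  rw [← map_mul, (Finset.mem_filter.1 hp).2]

theorem sq_sum_eq_of_isSumSet {G : Type*} [Group G] [Fintype G] (T : Finset G) (mu : ℕ)
    (h : IsSumSet (T : Set G) mu) (c : G →* ℤ) :
    (∑ x ∈ T, c x) ^ 2 = (sumReps (T : Set G) 1 : ℤ) - mu + mu * ∑ g, c g := by
  classical
  rw [sq_sum_eq_sum_sumReps, ← Finset.add_sum_erase _ _ (Finset.mem_univ (1 : G)),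
    ← Finset.add_sum_erase _ (fun g => c g) (Finset.mem_univ (1 : G)), map_one,
    Finset.sum_congr rfl (g := fun g => (mu : ℤ) * c g), ← Finset.mul_sum]
  · ring
  · intro g hg
    rw [h g (Finset.ne_of_mem_erase hg)]

theorem stmt_6 {G : Type*} [Group G] [Finite G] (N : Subgroup G) [N.Normal]
    (hidx : N.index = 2) (S : Set G) (mu : ℕ) (h : IsSumSet S mu) :
    ∃ s : ℤ, (S.ncard : ℤ) ^ 2 - (mu : ℤ) * (Nat.card G : ℤ) = s ^ 2 ∧
      (Odd S.ncard → s ≠ 0) := by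
  classical
  have := Fintype.ofFinite G
  obtain ⟨T, rfl⟩ := S.toFinite.exists_finset_coe
  rw [Set.ncard_coe_finset]
  refine ⟨∑ x ∈ T, signChar N hidx x, ?_, fun hodd h0 => ?_⟩
  · have h1 := sq_sum_eq_of_isSumSet T mu h 1
    have h2 := sq_sum_eq_of_isSumSet T mu h (signChar N hidx)
    rw [sum_signChar] at h2
    simp only [MonoidHom.one_apply, Finset.sum_const, Finset.card_univ, nsmul_eq_mul,
      mul_one] at h1
    rw [Nat.card_eq_fintype_card]
    linarith
  · -- Every term of `k - χ(S) = ∑ x ∈ S, (1 - χ x)` is `0` or `2`.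
    have hdvd : (2 : ℤ) ∣ ∑ x ∈ T, (1 - signChar N hidx x) := by
      refine Finset.dvd_sum fun x _ => ?_
      by_cases hx : x ∈ N
      · simp [signChar_of_mem N hidx hx]
      · simp [signChar_of_notMem N hidx hx]
    rw [Finset.sum_sub_distrib, h0] at hdvd
    simp only [Finset.sum_const, nsmul_eq_mul, mul_one, sub_zero] at hdvd
    obtain ⟨m, hm⟩ := hodd
    omega
end

section
/- Let G be a finite group of order v and S ⊆ G a (v,k,μ) sum set, and set n = k² − μv. In the integral group ring ℤ[G], writing S̄ = Σ_{s ∈ S} s and Ḡ = Σ_{g ∈ G} g, for every integer m ≥ 1 one has v·S̄^{2m+1} = k·(k^{2m} − n^m)·Ḡ + v·n^m·S̄. -/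
/-!
Write `S` and `G` for the sums of the elements of the set and of the group in `ℤ[G]`. Counting
representations gives `S² = n + μ G` (`sq_eq`): every nonidentity coefficient is `μ`, and the
identity coefficient is forced to be `μ + n` because all coefficients sum to `k²`. Together with
`G S = k G`, multiplying the formula for `m` by `S²` yields the one for `m + 1`; the induction can
start from the trivial case `m = 0`.
-/

open scoped Pointwise

section

variable {G : Type*} [Group G]

lemma sumReps_eq_card [DecidableEq G] (S : Finset G) (g : G) :
    sumReps (S : Set G) g = ((S ×ˢ S).filter (fun p => p.1 * p.2 = g)).card := by
  rw [sumReps, ← Set.ncard_coe_finset]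
  congr 1
  ext p
  simp [and_assoc]

lemma sum_sumReps [Fintype G] [DecidableEq G] (S : Finset G) :
    ∑ g : G, (sumReps (S : Set G) g : ℤ) = (S.card : ℤ) ^ 2 := by
  have h := Finset.card_eq_sum_card_fiberwise (s := S ×ˢ S) (t := Finset.univ)
    (f := fun p : G × G => p.1 * p.2) (fun _ _ => by simp)
  rw [Finset.card_product] at h
  simp only [sumReps_eq_card]
  rw [sq]
  exact_mod_cast h.symm

lemma sum_mul_sum_eq [Fintype G] [DecidableEq G] (S : Finset G) :
    (∑ s ∈ S, MonoidAlgebra.of ℤ G s) * (∑ s ∈ S, MonoidAlgebra.of ℤ G s) =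
      ∑ g : G, (sumReps (S : Set G) g : ℤ) • MonoidAlgebra.of ℤ G g := by
  rw [Finset.sum_mul_sum, ← Finset.sum_product',
    ← Finset.sum_fiberwise (s := S ×ˢ S) (g := fun p : G × G => p.1 * p.2)]
  refine Finset.sum_congr rfl fun g _ => ?_
  rw [sumReps_eq_card, natCast_zsmul, ← Finset.sum_const]
  refine Finset.sum_congr rfl fun p hp => ?_
  rw [← map_mul, (Finset.mem_filter.1 hp).2]

/-- In `ℤ[G]` a sum set satisfies `S² = n + μ G` with `n = k² - μ v`. -/
lemma sq_eq [Fintype G] [DecidableEq G] (S : Finset G) (mu : ℕ) (h : IsSumSet (S : Set G) mu) :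
    (∑ s ∈ S, MonoidAlgebra.of ℤ G s) * (∑ s ∈ S, MonoidAlgebra.of ℤ G s) =
      ((S.card : ℤ) ^ 2 - (mu : ℤ) * (Fintype.card G : ℤ)) • (1 : MonoidAlgebra ℤ G) +
        (mu : ℤ) • ∑ g : G, MonoidAlgebra.of ℤ G g := by
  have key : ∀ g : G, (sumReps (S : Set G) g : ℤ) =
      (if g = 1 then (sumReps (S : Set G) 1 : ℤ) - mu else 0) + mu := by
    intro g
    by_cases hg : g = 1
    · simp [hg]
    · simp [hg, h g hg]
  have h1 : (sumReps (S : Set G) 1 : ℤ) - mu =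
      (S.card : ℤ) ^ 2 - (mu : ℤ) * (Fintype.card G : ℤ) := by
    rw [← sum_sumReps S, Finset.sum_congr rfl fun g _ => key g, Finset.sum_add_distrib]
    simp
    ring
  rw [sum_mul_sum_eq, Finset.sum_congr rfl fun g _ => by rw [key g, add_smul],
    Finset.sum_add_distrib, ← Finset.smul_sum, h1]
  simp only [ite_smul, zero_smul, Finset.sum_ite_eq', Finset.mem_univ, if_true, map_one]

lemma sum_univ_mul_sum [Fintype G] (S : Finset G) :
    (∑ g : G, MonoidAlgebra.of ℤ G g) * (∑ s ∈ S, MonoidAlgebra.of ℤ G s) =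
      (S.card : ℤ) • ∑ g : G, MonoidAlgebra.of ℤ G g := by
  rw [Finset.mul_sum, natCast_zsmul, ← Finset.sum_const]
  refine Finset.sum_congr rfl fun s _ => ?_
  rw [Finset.sum_mul]
  simp only [← map_mul]
  exact Equiv.sum_comp (Equiv.mulRight s) (fun g => MonoidAlgebra.of ℤ G g)

end

theorem stmt_9 {G : Type*} [Group G] [Fintype G] [DecidableEq G]
    (S : Finset G) (mu : ℕ) (h : IsSumSet (S : Set G) mu) (m : ℕ) (hm : 1 ≤ m) :
    (Fintype.card G : ℤ) • (∑ s ∈ S, MonoidAlgebra.of ℤ G s) ^ (2 * m + 1) =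
      ((S.card : ℤ) * ((S.card : ℤ) ^ (2 * m) -
            ((S.card : ℤ) ^ 2 - (mu : ℤ) * (Fintype.card G : ℤ)) ^ m)) •
          (∑ g : G, MonoidAlgebra.of ℤ G g) +
        ((Fintype.card G : ℤ) * ((S.card : ℤ) ^ 2 - (mu : ℤ) * (Fintype.card G : ℤ)) ^ m) •
          (∑ s ∈ S, MonoidAlgebra.of ℤ G s) := by
  clear hm
  have hsq := sq_eq S mu h
  have hGS := sum_univ_mul_sum S
  generalize (∑ s ∈ S, MonoidAlgebra.of ℤ G s) = A at *
  generalize (∑ g : G, MonoidAlgebra.of ℤ G g) = B at *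
  generalize (Fintype.card G : ℤ) = v at *
  generalize (S.card : ℤ) = k at *
  -- Reassociating, `A ^ 3 = n A + μ k B`, which avoids needing `A * B`.
  have hA3 : A * (A * A) = (k ^ 2 - mu * v) • A + (mu * k : ℤ) • B := by
    rw [← mul_assoc, hsq, add_mul, smul_mul_assoc, smul_mul_assoc, hGS, one_mul, smul_smul]
  have hB2 : B * (A * A) = (k ^ 2) • B := by
    rw [← mul_assoc, hGS, smul_mul_assoc, hGS, smul_smul, sq]
  induction m with
  | zero => simp
  | succ m ih =>
    have e : A ^ (2 * (m + 1) + 1) = A ^ (2 * m + 1) * (A * A) := by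
      rw [← sq, ← pow_add]
      congr 1
    rw [e, ← smul_mul_assoc, ih, add_mul, smul_mul_assoc, smul_mul_assoc, hA3, hB2]
    module
end

section
/- Let G be a finite abelian group of order v and let S ⊆ G be a (v,k,μ) sum set with 2 ≤ k ≤ v − 2. Then S is reversible, i.e., S = S^{(-1)}. -/
/-!
Work in the commutative group algebra `ℚ[G]`, with `s = ∑_{g ∈ S} g`, `J = ∑_{g ∈ G} g`, and
the involution `σ` induced by `g ↦ g⁻¹`. The sum set condition says `s² = n + μJ` for an integer
`n`. In terms of characters, `χ(S)² = n` for every nontrivial `χ`, so either all `χ(S)` are real,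
whence `S = S⁻¹`, or all are purely imaginary, whence `s + σ s` is a multiple of `J`; the latter
forces `S` to be empty or all of `G`, by looking at the (even) coefficient of the identity.

Characters are replaced by positivity: the identity coefficient of `x * σ x` is `∑ x(g)²`.
With `t = σ s` and `D = s - t`, `F = |G|(s + t) - 2|S|J`, we have `(s - t)(s + t) = 0`,
`D J = F J = 0` and hence `D⁴ = 4n D²`, `F⁴ = 4n|G|² F²`, while `σ D = -D` and `σ F = F`.
Comparing signs of identity coefficients gives `D = 0` if `n ≥ 0` and `F = 0` if `n < 0`
(`eq_zero_of_pow_four`).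
-/

open scoped Pointwise

namespace SumSetAux

variable {G : Type*} [CommGroup G]

/-- The involution of the rational group algebra induced by inversion. -/
noncomputable def inv (G : Type*) [CommGroup G] : MonoidAlgebra ℚ G ≃ₐ[ℚ] MonoidAlgebra ℚ G :=
  MonoidAlgebra.domCongr ℚ ℚ (MulEquiv.inv G)

lemma coeff_inv (x : MonoidAlgebra ℚ G) (g : G) : (inv G x).coeff g = x.coeff g⁻¹ := by
  simp [inv, MonoidAlgebra.domCongr]

variable [Fintype G]

lemma coeff_mul (x y : MonoidAlgebra ℚ G) (g : G) :
    (x * y).coeff g = ∑ h, x.coeff h * y.coeff (h⁻¹ * g) := by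
  rw [MonoidAlgebra.coeff_mul_apply_left, Finsupp.sum_fintype]
  simp

lemma coeff_mul_inv_one (x : MonoidAlgebra ℚ G) :
    (x * inv G x).coeff 1 = ∑ h, x.coeff h ^ 2 := by
  rw [coeff_mul]
  exact Finset.sum_congr rfl fun h _ => by rw [coeff_inv]; simp [sq]

lemma coeff_mul_inv_one_nonneg (x : MonoidAlgebra ℚ G) : 0 ≤ (x * inv G x).coeff 1 := by
  rw [coeff_mul_inv_one]; positivity

/-- Definiteness: the identity coefficient of `x * inv G x` is a sum of squares. -/
lemma eq_zero_of_coeff (x : MonoidAlgebra ℚ G) (h : (x * inv G x).coeff 1 ≤ 0) : x = 0 := by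
  rw [coeff_mul_inv_one] at h
  have h0 := le_antisymm h (by positivity)
  rw [Finset.sum_eq_zero_iff_of_nonneg (fun _ _ => sq_nonneg _)] at h0
  ext g
  simpa using h0 g (Finset.mem_univ g)

/-- The group-algebra form of the fact that every nonzero eigenvalue has positive square for a real
symmetric matrix (`ε = 1`) and negative square for a skew-symmetric one (`ε = -1`): the relation
`x⁴ = c x²` makes `c` the only possible nonzero square of an eigenvalue, and `c` has the wrong
sign. -/
lemma eq_zero_of_pow_four (x : MonoidAlgebra ℚ G) (ε c : ℚ) (hε : ε = 1 ∨ ε = -1)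
    (hx : inv G x = ε • x) (h4 : x ^ 2 * x ^ 2 = c • x ^ 2) (hc : ε * c ≤ 0) : x = 0 := by
  have hε2 : ε * ε = 1 := by rcases hε with rfl | rfl <;> norm_num
  have hx2 : inv G (x ^ 2) = x ^ 2 := by
    rw [map_pow, hx, smul_pow, sq ε, hε2, one_smul]
  have hxx : x ^ 2 = ε • (x * inv G x) := by
    rw [hx, mul_smul_comm, smul_smul, hε2, one_smul, sq]
  have h0 : x ^ 2 = 0 := by
    apply eq_zero_of_coeff
    rw [hx2, h4, hxx, smul_smul, MonoidAlgebra.coeff_smul_apply, smul_eq_mul, mul_comm c]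
    exact mul_nonpos_of_nonpos_of_nonneg hc (coeff_mul_inv_one_nonneg x)
  apply eq_zero_of_coeff
  rw [hx, mul_smul_comm, ← sq, h0]
  simp

/-- The formal sum of all elements of the group. -/
noncomputable def J (G : Type*) [Fintype G] : MonoidAlgebra ℚ G :=
  .ofCoeff (Finsupp.equivFunOnFinite.symm fun _ => 1)

@[simp] lemma coeff_J (g : G) : (J G).coeff g = 1 := rfl

lemma inv_J : inv G (J G) = J G := by
  ext g; simp [coeff_inv]

lemma mul_J (x : MonoidAlgebra ℚ G) : x * J G = (∑ h, x.coeff h) • J G := by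
  ext g; simp [coeff_mul]

open scoped Classical in
/-- The formal sum of the elements of `S`. -/
noncomputable def ind (S : Set G) : MonoidAlgebra ℚ G :=
  .ofCoeff (Finsupp.equivFunOnFinite.symm fun g => if g ∈ S then 1 else 0)

open scoped Classical in
lemma coeff_ind (S : Set G) (g : G) : (ind S).coeff g = if g ∈ S then 1 else 0 := rfl

lemma sum_coeff_ind (S : Set G) : ∑ g, (ind S).coeff g = S.ncard := by
  classical
  simp only [coeff_ind, Finset.sum_boole]
  rw [Set.ncard_eq_toFinset_card', Set.toFinset_card, Fintype.card_subtype]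

lemma coeff_ind_mul_self (S : Set G) (g : G) :
    (ind S * ind S).coeff g = sumReps S g := by
  classical
  simp only [coeff_mul, coeff_ind, ← ite_and, mul_ite, mul_one, mul_zero]
  rw [Finset.sum_boole, sumReps, ← Set.ncard_coe_finset]
  congr 1
  symm
  refine Set.ncard_congr (fun p _ => p.1) ?_ ?_ ?_
  · rintro ⟨a, b⟩ ⟨ha, hb, rfl⟩
    simpa using ⟨hb, ha⟩
  · rintro ⟨a, b⟩ ⟨a', b'⟩ ⟨-, -, h⟩ ⟨-, -, h'⟩ (rfl : a = a')
    simp only at h h'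
    simpa using h.trans h'.symm
  · intro a ha
    simp only [Finset.coe_filter, Finset.mem_univ, true_and, Set.mem_ofPred_eq] at ha
    exact ⟨(a, a⁻¹ * g), ⟨ha.2, ha.1, by simp⟩, rfl⟩

end SumSetAux

open SumSetAux in
theorem stmt_10 {G : Type*} [CommGroup G] [Finite G] (S : Set G) (mu : ℕ)
    (h : IsSumSet S mu) (h1 : 2 ≤ S.ncard) (h2 : S.ncard ≤ Nat.card G - 2) :
    S = S⁻¹ := by
  have := Fintype.ofFinite G
  set k : ℚ := (S.ncard : ℚ) with hk
  set v : ℚ := (Nat.card G : ℚ) with hv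
  have hk0 : 0 < k := by rw [hk]; exact_mod_cast (by omega : 0 < S.ncard)
  have hkv : k < v := by rw [hk, hv]; exact_mod_cast (by omega : S.ncard < Nat.card G)
  set n : ℚ := (sumReps S 1 : ℚ) - mu with hn
  set s := ind S
  set t := inv G s with ht
  set j := J G
  have hss : s * s = n • (1 : MonoidAlgebra ℚ G) + (mu : ℚ) • j := by
    ext g
    rw [coeff_ind_mul_self]
    by_cases hg : g = 1
    · subst hg
      simp [j, hn, MonoidAlgebra.one_def]
    · rw [h g hg]
      simp [j, MonoidAlgebra.one_def, Ne.symm hg]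
  have htt : t * t = n • (1 : MonoidAlgebra ℚ G) + (mu : ℚ) • j := by
    rw [ht, ← map_mul, hss]
    simp [j, inv_J]
  have hsj : s * j = k • j := by rw [mul_J, sum_coeff_ind]
  have htj : t * j = k • j := by
    have := congrArg (inv G) hsj
    simpa [j, inv_J] using this
  have hjj : j * j = v • j := by
    rw [mul_J]; simp [j, hv]
  have hit : inv G t = s := by
    ext g; simp [ht, coeff_inv]
  simp only [Algebra.smul_def, mul_one] at hss htt hsj htj hjj
  rcases le_or_gt 0 n with hn0 | hn0
  -- Here `χ(S)² = n ≥ 0` is the real case: the skew part of `s` vanishes.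
  · have hD : s - t = 0 := by
      apply eq_zero_of_pow_four (s - t) (-1) (4 * n) (Or.inr rfl)
      · rw [map_sub, hit]; simp [t]
      · have hDJ : (s - t) * j = 0 := by linear_combination hsj - htj
        have hDE : (s - t) * (s + t) = 0 := by linear_combination hss - htt
        rw [Algebra.smul_def, map_mul]
        simp only [map_ofNat]
        linear_combination (2 * (s - t) ^ 2) * (hss + htt)
          + 4 * algebraMap ℚ _ (mu : ℚ) * (s - t) * hDJ - (s - t) * (s + t) * hDE
      · linarith
    ext g
    have hg := congrArg (fun x => MonoidAlgebra.coeff x g) (sub_eq_zero.mp hD)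
    simp only [t, coeff_inv, s, coeff_ind] at hg
    rw [Set.mem_inv]
    split_ifs at hg <;> simp_all
  -- Here `n < 0` is the imaginary case: the symmetric part of `s` is a multiple of `j`.
  · exfalso
    have hF : v • (s + t) - (2 * k) • j = 0 := by
      apply eq_zero_of_pow_four _ 1 (4 * n * v ^ 2) (Or.inl rfl)
      · simp only [map_sub, map_smul, map_add, hit, j, inv_J, one_smul]
        rw [← ht, add_comm]
      · simp only [Algebra.smul_def, map_mul, map_pow, map_ofNat]
        set V := algebraMap ℚ (MonoidAlgebra ℚ G) v
        set K := algebraMap ℚ (MonoidAlgebra ℚ G) k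
        set N := algebraMap ℚ (MonoidAlgebra ℚ G) n
        set M := algebraMap ℚ (MonoidAlgebra ℚ G) (mu : ℚ)
        set F := V * (s + t) - 2 * K * j with hFdef
        have hFJ : F * j = 0 := by linear_combination V * (hsj + htj) - 2 * K * hjj
        have hDE : (s - t) * (s + t) = 0 := by linear_combination hss - htt
        have hFD : F * (s - t) = 0 := by
          linear_combination V * hDE - 2 * K * (hsj - htj)
        have hFE : F * F = V * (s + t) * F := by linear_combination (-2 * K) * hFJ
        have h3 : F * (s + t) ^ 2 = 4 * N * F := by
          linear_combination 2 * F * (hss + htt) + 4 * M * hFJ - (s - t) * hFD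
        linear_combination (F * F + V * (s + t) * F) * hFE + V ^ 2 * F * h3
      · nlinarith [sq_nonneg v]
    -- At the identity, `v (s + t) = 2 k j` reads `2v = 2k` or `0 = 2k`.
    have h0 := congrArg (fun x => MonoidAlgebra.coeff x 1) hF
    simp only [MonoidAlgebra.coeff_sub, MonoidAlgebra.coeff_smul, MonoidAlgebra.coeff_add,
      Finsupp.sub_apply, Finsupp.smul_apply, Finsupp.add_apply, t, coeff_inv, inv_one, s,
      coeff_ind, j, coeff_J, smul_eq_mul, MonoidAlgebra.coeff_zero, Finsupp.zero_apply] at h0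
    split_ifs at h0 <;> linarith
end

section
/- Let G be a finite abelian group of order v and let S ⊆ G be a (v,k,μ) sum set with 2 ≤ k ≤ v − 2. Then S is a reversible difference set: S = S^{(-1)} and S is a (v,k,μ) difference set, i.e., every nonidentity element g ∈ G has exactly μ representations g = xy^{-1} with x, y ∈ S. -/
/-!
Regard `S` as an element of the group ring of `G` and let it act on functions on `G`, giving the
real matrix `A` with `A x y = [x⁻¹ * y ∈ S]`. Its transpose is the matrix of `S⁻¹`, the two commute
because `G` is abelian, and the sum set condition reads `A ^ 2 = n + μ J` for some integer `n`,
where `J` is the all-ones matrix. In terms of characters, `χ(S) ^ 2 = n` for every nontrivial `χ`,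
so all these values are real, or all are purely imaginary; the proof runs this dichotomy on the
matrices directly, through the skew part `D = A - Aᵀ` and the symmetric part `E = A + Aᵀ`.

Normality gives `D E = 0`, and `D ^ 2 + E ^ 2 = 4 n + 4 μ J`.
* If `n ≥ 0`, then `D ^ 3 = 4 n D`. A skew matrix with this property vanishes
  (`eq_zero_of_cube_eq_smul`), so `S = S⁻¹`, and then quotients and products of elements of `S`
  are represented equally often.
* If `n < 0`, then the projection `E' = E - (2k/v) J` of `E` away from `J` satisfies
  `E' ^ 3 = 4 n E'`, and a symmetric matrix with this property vanishes. Hence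
  `[g ∈ S] + [g⁻¹ ∈ S]` does not depend on `g`. At `g = 1` it is `0` or `2`, so `S` is empty or
  all of `G`, which the bounds on `|S|` exclude.
-/

open scoped Pointwise

open Matrix in
/-- The eigenvalues of a real symmetric (`ε = 1`) or skew-symmetric (`ε = -1`) matrix `B` have
squares of sign `ε`, so `B ^ 3 = c B` with `c` of the opposite sign, or `0`, forces `B = 0`. -/
lemma eq_zero_of_cube_eq_smul {n : Type*} [Fintype n] (B : Matrix n n ℝ) (ε c : ℝ)
    (hε : ε * ε = 1) (hB : Bᵀ = ε • B) (hc : ε * c ≤ 0) (h : B * B * B = c • B) : B = 0 := by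
  have key : (B * B)ᵀ * (B * B) = (ε * c) • (Bᵀ * B) := by
    rw [transpose_mul, hB]
    simp only [smul_mul_assoc, mul_smul_comm, smul_smul]
    rw [hε, one_smul, ← mul_assoc, h, smul_mul_assoc, mul_right_comm, hε, one_mul]
  have pos (C : Matrix n n ℝ) : 0 ≤ (Cᵀ * C).trace := by
    have := (posSemidef_conjTranspose_mul_self C).trace_nonneg
    rwa [conjTranspose_eq_transpose_of_trivial] at this
  have zero (C : Matrix n n ℝ) (hC : (Cᵀ * C).trace = 0) : C = 0 := by
    rw [← conjTranspose_eq_transpose_of_trivial] at hC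
    exact trace_conjTranspose_mul_self_eq_zero_iff.1 hC
  have ht := congrArg trace key
  rw [trace_smul, smul_eq_mul] at ht
  have hBB : B * B = 0 :=
    zero _ (le_antisymm (ht ▸ mul_nonpos_of_nonpos_of_nonneg hc (pos B)) (pos _))
  apply zero
  rw [hB, smul_mul_assoc, hBB, smul_zero, trace_zero]

open Matrix in
/-- The dichotomy for a normal matrix `A` with constant row and column sums `k` whose square is
`n + μ J`: it is symmetric, or its symmetric part is a multiple of `J`. -/
lemma symm_or_symmPart_const {ι : Type*} [Fintype ι] [DecidableEq ι] [Nonempty ι]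
    (A J : Matrix ι ι ℝ) (n μ k : ℝ) (hJ : ∀ i j, J i j = 1)
    (hsq : A * A = n • (1 : Matrix ι ι ℝ) + μ • J) (hnormal : A * Aᵀ = Aᵀ * A)
    (hAJ : A * J = k • J) (hJA : J * A = k • J) :
    Aᵀ = A ∨ ∃ c : ℝ, A + Aᵀ = c • J := by
  have hJt : Jᵀ = J := by ext; simp [hJ]
  have hsq' : Aᵀ * Aᵀ = n • (1 : Matrix ι ι ℝ) + μ • J := by
    have := congrArg transpose hsq
    simpa [transpose_mul, hJt] using this
  have hAtJ : Aᵀ * J = k • J := by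
    have := congrArg transpose hJA
    simpa [transpose_mul, hJt] using this
  have hJAt : J * Aᵀ = k • J := by
    have := congrArg transpose hAJ
    simpa [transpose_mul, hJt] using this
  have hsum : (A - Aᵀ) * (A - Aᵀ) + (A + Aᵀ) * (A + Aᵀ)
      = (4 * n) • (1 : Matrix ι ι ℝ) + (4 * μ) • J := by
    have : (A - Aᵀ) * (A - Aᵀ) + (A + Aᵀ) * (A + Aᵀ)
        = (2 : ℝ) • (A * A) + (2 : ℝ) • (Aᵀ * Aᵀ) := by
      rw [two_smul, two_smul]; noncomm_ring
    rw [this, hsq, hsq']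
    module
  have hDE : (A - Aᵀ) * (A + Aᵀ) = 0 := by
    rw [sub_mul, mul_add, mul_add, hsq, hsq', hnormal]; abel
  have hED : (A + Aᵀ) * (A - Aᵀ) = 0 := by
    rw [add_mul, mul_sub, mul_sub, hsq, hsq', hnormal]; abel
  rcases le_or_gt 0 n with hn | hn
  · left
    -- `D (D ^ 2 + E ^ 2) = D ^ 3` and `D J = 0`
    have hDJ : (A - Aᵀ) * J = 0 := by rw [sub_mul, hAJ, hAtJ, sub_self]
    have h3 : (A - Aᵀ) * (A - Aᵀ) * (A - Aᵀ) = (4 * n) • (A - Aᵀ) := by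
      have := congrArg ((A - Aᵀ) * ·) hsum
      simp only [mul_add (A - Aᵀ) (_ * _), mul_add (A - Aᵀ) (_ • _), ← mul_assoc, hDE,
        mul_smul_comm, hDJ, mul_one, zero_mul, add_zero, smul_zero] at this
      exact this
    have := eq_zero_of_cube_eq_smul (A - Aᵀ) (-1) (4 * n) (by norm_num)
      (by simp) (by linarith) h3
    exact (sub_eq_zero.1 this).symm
  · right
    -- the constant `c = 2k/v` makes `F = E - c J` annihilate `J`
    set v : ℝ := (Fintype.card ι : ℝ) with hv
    have hv0 : v ≠ 0 := by simp [hv]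
    have hJJ : J * J = v • J := by ext i j; simp [mul_apply, hJ, hv]
    set c : ℝ := 2 * k / v with hc
    have hcv : c * v = 2 * k := by rw [hc]; field_simp
    refine ⟨c, ?_⟩
    set F := A + Aᵀ - c • J with hF
    have hE : A + Aᵀ = F + c • J := by rw [hF]; abel
    have hFJ : F * J = 0 := by
      rw [hF, sub_mul, add_mul, hAJ, hAtJ, smul_mul_assoc, hJJ, smul_smul, hcv]; module
    have hJD : J * (A - Aᵀ) = 0 := by rw [mul_sub, hJA, hJAt, sub_self]
    have hFD : F * (A - Aᵀ) = 0 := by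
      rw [hF, sub_mul, hED, smul_mul_assoc, hJD, smul_zero, sub_zero]
    have hFE (X : Matrix ι ι ℝ) : X * F * (A + Aᵀ) = X * F * F := by
      rw [hE, mul_add, mul_smul_comm, mul_assoc X F J, hFJ, mul_zero, smul_zero, add_zero]
    have hFE1 : F * (A + Aᵀ) = F * F := by simpa using hFE 1
    have h3 : F * F * F = (4 * n) • F := by
      have := congrArg (F * ·) hsum
      simp only [mul_add F (_ * _), mul_add F (_ • _), ← mul_assoc, hFD, hFE1, hFE,
        mul_smul_comm, hFJ, mul_one, zero_mul, add_zero, zero_add, smul_zero] at this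
      exact this
    have := eq_zero_of_cube_eq_smul F 1 (4 * n) (by norm_num)
      (by simp [hF, hJt, add_comm]) (by linarith) h3
    rw [hE, this, zero_add]

open Classical in
/-- The matrix of convolution with the indicator function of `S`: its `(x, y)` entry is the
indicator of `x⁻¹ * y ∈ S`. -/
noncomputable def convMat {G : Type*} [Group G] (S : Set G) : Matrix G G ℝ :=
  Matrix.of fun x y => if x⁻¹ * y ∈ S then 1 else 0

open Classical in
lemma sumReps_eq_sum_s11 {G : Type*} [Group G] [Fintype G] (S : Set G) (g : G) :
    (sumReps S g : ℝ) = ∑ z, if z ∈ S ∧ z⁻¹ * g ∈ S then 1 else 0 := by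
  have : {p : G × G | p.1 ∈ S ∧ p.2 ∈ S ∧ p.1 * p.2 = g}
      = (fun z => (z, z⁻¹ * g)) '' {z | z ∈ S ∧ z⁻¹ * g ∈ S} := by
    ext ⟨a, b⟩
    constructor
    · rintro ⟨ha, hb, rfl⟩
      exact ⟨a, by simpa using ⟨ha, hb⟩, by simp⟩
    · rintro ⟨z, ⟨h1, h2⟩, h⟩
      obtain ⟨rfl, rfl⟩ := Prod.mk.inj h
      exact ⟨h1, h2, by simp⟩
  rw [sumReps, this, Set.ncard_image_of_injective _ fun a b h => (Prod.mk.inj h).1,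
    Set.ncard_eq_toFinset_card', Finset.sum_boole]
  congr 2
  ext; simp

/-- The matrix of `S` squares to the matrix of the element `S * S` of the group ring. -/
lemma convMat_mul_self {G : Type*} [Group G] [Fintype G] (S : Set G) (x y : G) :
    (convMat S * convMat S) x y = sumReps S (x⁻¹ * y) := by
  classical
  rw [sumReps_eq_sum_s11, Matrix.mul_apply, ← Equiv.sum_comp (Equiv.mulLeft x)]
  refine Finset.sum_congr rfl fun z _ => ?_
  by_cases h1 : z ∈ S <;> simp [convMat, h1, mul_assoc]

/-- Commutativity of `G` enters here: `z ↦ x * y / z` exchanges the two sums over `z`. -/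
lemma convMat_normal {G : Type*} [CommGroup G] [Fintype G] (S : Set G) :
    convMat S * (convMat S).transpose = (convMat S).transpose * convMat S := by
  ext x y
  rw [Matrix.mul_apply, Matrix.mul_apply, ← Equiv.sum_comp (Equiv.divLeft (x * y))]
  refine Finset.sum_congr rfl fun z _ => ?_
  have e1 : x⁻¹ * (x * y / z) = z⁻¹ * y := by
    rw [div_eq_mul_inv, mul_assoc x, inv_mul_cancel_left, mul_comm]
  have e2 : y⁻¹ * (x * y / z) = z⁻¹ * x := by
    rw [mul_comm x y, div_eq_mul_inv, mul_assoc y, inv_mul_cancel_left, mul_comm]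
  simp only [convMat, Matrix.transpose_apply, Matrix.of_apply, Equiv.divLeft_apply]
  rw [e1, e2]
  exact mul_comm (_ : ℝ) _

lemma convMat_row_sum {G : Type*} [Group G] [Fintype G] (S : Set G) (x : G) :
    ∑ y, convMat S x y = S.ncard := by
  classical
  rw [← Equiv.sum_comp (Equiv.mulLeft x), Set.ncard_eq_toFinset_card']
  simp [convMat]

lemma convMat_col_sum {G : Type*} [Group G] [Fintype G] (S : Set G) (y : G) :
    ∑ x, convMat S x y = S.ncard := by
  classical
  rw [← Equiv.sum_comp (Equiv.divLeft y), Set.ncard_eq_toFinset_card']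
  simp [convMat, div_eq_mul_inv]

lemma diffReps_eq_sumReps {G : Type*} [Group G] {S : Set G} (hS : S = S⁻¹) (g : G) :
    diffReps S g = sumReps S g := by
  have hmem (x : G) : x⁻¹ ∈ S ↔ x ∈ S := by
    conv_rhs => rw [hS]
    rfl
  rw [diffReps, sumReps,
    ← Set.ncard_image_of_injective _ ((Equiv.refl G).prodCongr (Equiv.inv G)).injective]
  congr 1
  ext ⟨a, b⟩
  rw [Equiv.image_eq_preimage_symm]
  simp [hmem]

theorem stmt_11 {G : Type*} [CommGroup G] [Finite G] (S : Set G) (mu : ℕ)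
    (h : IsSumSet S mu) (h1 : 2 ≤ S.ncard) (h2 : S.ncard ≤ Nat.card G - 2) :
    S = S⁻¹ ∧ IsDiffSet S mu := by
  classical
  have := Fintype.ofFinite G
  set J : Matrix G G ℝ := Matrix.of fun _ _ => 1 with hJ
  have hsq : convMat S * convMat S
      = ((sumReps S 1 : ℝ) - mu) • (1 : Matrix G G ℝ) + (mu : ℝ) • J := by
    ext x y
    rw [convMat_mul_self]
    rcases eq_or_ne x y with rfl | hxy
    · simp [hJ]
    · rw [h _ fun e => hxy (inv_mul_eq_one.1 e)]
      simp [hJ, hxy]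
  have hAJ : convMat S * J = (S.ncard : ℝ) • J := by
    ext x y
    simp [Matrix.mul_apply, hJ, convMat_row_sum]
  have hJA : J * convMat S = (S.ncard : ℝ) • J := by
    ext x y
    simp [Matrix.mul_apply, hJ, convMat_col_sum]
  rcases symm_or_symmPart_const _ J _ _ _ (fun _ _ => rfl) hsq (convMat_normal S) hAJ hJA with
    hA | ⟨c, hc⟩
  · have hS : S = S⁻¹ := by
      ext g
      have := congrFun (congrFun hA 1) g
      by_cases h1 : g ∈ S <;> by_cases h2 : g⁻¹ ∈ S <;> simp_all [convMat]
    exact ⟨hS, fun g hg => (diffReps_eq_sumReps hS g).trans (h g hg)⟩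
  · exfalso
    have hg (g : G) : g ∈ S ↔ 1 ∈ S := by
      -- compare the entries at `(1, 1)` and `(1, g)`: `2 [1 ∈ S] = [g ∈ S] + [g⁻¹ ∈ S]`
      have e1 := congrFun (congrFun hc 1) 1
      have e2 := congrFun (congrFun hc 1) g
      rw [show (c • J) 1 1 = (c • J) 1 g from rfl, ← e2] at e1
      by_cases h0 : (1 : G) ∈ S <;> by_cases h1 : g ∈ S <;> by_cases h2 : g⁻¹ ∈ S <;>
        simp [convMat, h0, h1, h2] at e1 ⊢
      norm_num at e1
    by_cases h0 : (1 : G) ∈ S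
    · have : S = Set.univ := Set.eq_univ_of_forall fun g => (hg g).2 h0
      rw [this, Set.ncard_univ] at h1 h2
      omega
    · have : S = ∅ := Set.eq_empty_of_forall_notMem fun g => fun hgS => h0 ((hg g).1 hgS)
      simp [this] at h1
end

section
/- Let G be a finite group of order v, let z be a central element of G of order 2, and let N = {1, z} (a normal subgroup of order 2). Let S ⊆ G be a (v,k,μ) sum set. Then: (1) the translate Sz = {sz : s ∈ S} is also a (v,k,μ) sum set; (2) if S is type 1 with respect to N, then Sz is also a type 1 sum set with respect to N and S ∩ Sz = ∅; (3) if S is type 2 with respect to N, then Sz is also a type 2 sum set with respect to N and S and Sz differ in precisely one element, i.e., |S \ Sz| = 1 = |Sz \ S|. -/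
/-!
Right multiplication by a central involution `z` is an involutive bijection of `G` that preserves
each coset `{g, g * z}` of `N = {1, z}`, and `(x * z) * (y * z) = x * y`. Hence it carries the
representations of `g` by `S` onto those by `Sz`, and `S ∩ gN` onto `Sz ∩ gN`; so the sum set
property and the types depend only on `S` up to this translation. An element of `S` lies in `Sz`
exactly when `S` contains its whole coset: never for type 1, and for type 2 in every case except
for the single element of `S ∩ N`.
-/

open scoped Pointwise

/-- `S` is type 1 with respect to the normal subgroup `N = {1, z}` of order 2:
it misses `N` and meets every coset of `N` in at most one element. -/
def IsType1 {G : Type*} [Group G] (S : Set G) (z : G) : Prop :=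
  S ∩ {1, z} = ∅ ∧ ∀ g : G, (S ∩ {g, g * z}).ncard ≤ 1

/-- `S` is type 2 with respect to the normal subgroup `N = {1, z}` of order 2:
it meets `N` in exactly one element and meets every other coset of `N` in 0 or 2 elements. -/
def IsType2 {G : Type*} [Group G] (S : Set G) (z : G) : Prop :=
  (S ∩ {1, z}).ncard = 1 ∧ ∀ g : G, g ∉ ({1, z} : Set G) →
    (S ∩ {g, g * z}).ncard = 0 ∨ (S ∩ {g, g * z}).ncard = 2

theorem mem_translate_iff {G : Type*} [Group G] {z : G} (hzz : z * z = 1) (S : Set G) (x : G) :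
    x ∈ (· * z) '' S ↔ x * z ∈ S := by
  constructor
  · rintro ⟨y, hy, rfl⟩
    simpa [mul_assoc, hzz] using hy
  · intro hx
    exact ⟨x * z, hx, by simp [mul_assoc, hzz]⟩

theorem translate_inter_coset {G : Type*} [Group G] {z : G} (hzz : z * z = 1) (S : Set G)
    (g : G) : (· * z) '' S ∩ {g, g * z} = (· * z) '' (S ∩ {g, g * z}) := by
  rw [Set.image_inter (mul_left_injective z), Set.image_pair, mul_assoc, hzz, mul_one,
    Set.pair_comm (g * z) g]

theorem sumReps_translate {G : Type*} [Group G] {z : G} (hz : z ∈ Subgroup.center G)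
    (hzz : z * z = 1) (S : Set G) (g : G) : sumReps ((· * z) '' S) g = sumReps S g := by
  have hmul : ∀ x y : G, x * z * (y * z) = x * y := fun x y => by
    rw [mul_assoc, ← mul_assoc z y z, ← Subgroup.mem_center_iff.mp hz y, mul_assoc y, hzz, mul_one]
  have hinj : Function.Injective (fun p : G × G => (p.1 * z, p.2 * z)) := by
    rintro ⟨a, b⟩ ⟨c, d⟩ hp
    simpa using hp
  unfold sumReps
  rw [← Set.ncard_image_of_injective {p : G × G | p.1 ∈ S ∧ p.2 ∈ S ∧ p.1 * p.2 = g} hinj]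
  congr 1
  ext ⟨a, b⟩
  simp only [Set.mem_ofPred_eq, mem_translate_iff hzz]
  constructor
  · rintro ⟨ha, hb, hab⟩
    exact ⟨(a * z, b * z), ⟨ha, hb, by rw [hmul, hab]⟩, by simp [mul_assoc, hzz]⟩
  · rintro ⟨⟨c, d⟩, ⟨hc, hd, hcd⟩, heq⟩
    obtain ⟨rfl, rfl⟩ := Prod.mk.inj heq
    refine ⟨?_, ?_, by rw [hmul]; exact hcd⟩
    · simpa [mul_assoc, hzz] using hc
    · simpa [mul_assoc, hzz] using hd

theorem stmt_12 {G : Type*} [Group G] [Finite G]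
    (z : G) (hz : z ∈ Subgroup.center G) (hz2 : z ^ 2 = 1) (hz1 : z ≠ 1)
    (S : Set G) (mu : ℕ) (h : IsSumSet S mu) :
    IsSumSet ((· * z) '' S) mu ∧
      (IsType1 S z → IsType1 ((· * z) '' S) z ∧ S ∩ ((· * z) '' S) = ∅) ∧
      (IsType2 S z → IsType2 ((· * z) '' S) z ∧
        (S \ ((· * z) '' S)).ncard = 1 ∧ (((· * z) '' S) \ S).ncard = 1) := by
  have hzz : z * z = 1 := by rw [← sq, hz2]
  have hcoset (g : G) : ((· * z) '' S ∩ {g, g * z}).ncard = (S ∩ {g, g * z}).ncard := by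
    rw [translate_inter_coset hzz, Set.ncard_image_of_injective _ (mul_left_injective z)]
  have hN : (· * z) '' S ∩ {1, z} = (· * z) '' (S ∩ {1, z}) := by
    simpa using translate_inter_coset hzz S 1
  have hpair (g : G) : ({g, g * z} : Set G).ncard = 2 :=
    Set.ncard_pair fun e => hz1 (by simpa using e)
  refine ⟨fun g hg => by rw [sumReps_translate hz hzz, h g hg], ?_, ?_⟩
  · rintro ⟨h0, h1⟩
    refine ⟨⟨by rw [hN, h0, Set.image_empty], fun g => (hcoset g).trans_le (h1 g)⟩, ?_⟩
    rw [Set.eq_empty_iff_forall_notMem]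
    rintro x ⟨hx, hxz⟩
    rw [mem_translate_iff hzz] at hxz
    have hsub : ({x, x * z} : Set G) ⊆ S := Set.pair_subset hx hxz
    have := h1 x
    rw [Set.inter_eq_right.mpr hsub, hpair] at this
    omega
  · rintro ⟨h0, h2⟩
    have hdiff : S \ ((· * z) '' S) = S ∩ {1, z} := by
      ext x
      simp only [Set.mem_sdiff, mem_translate_iff hzz]
      constructor
      · rintro ⟨hx, hxz⟩
        refine ⟨hx, ?_⟩
        by_contra hxN
        rcases h2 x hxN with hc | hc
        · rw [Set.ncard_eq_zero] at hc
          exact Set.notMem_empty x (hc ▸ ⟨hx, Set.mem_insert x _⟩)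
        · have heq := Set.eq_of_subset_of_ncard_le (Set.inter_subset_right (s := S))
            ((hpair x).trans hc.symm).le
          exact hxz (Set.inter_eq_right.mp heq (by simp))
      · rintro ⟨hx, hxN⟩
        refine ⟨hx, fun hxz => ?_⟩
        obtain ⟨a, ha⟩ := Set.ncard_eq_one.mp h0
        have hxa : x ∈ S ∩ {1, z} := ⟨hx, hxN⟩
        have hxza : x * z ∈ S ∩ {1, z} := by
          refine ⟨hxz, ?_⟩
          rcases hxN with rfl | rfl <;> simp [hzz]
        rw [ha, Set.mem_singleton_iff] at hxa hxza
        exact hz1 (by simpa using hxza.trans hxa.symm)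
    have hdiff' : ((· * z) '' S) \ S = (· * z) '' (S \ ((· * z) '' S)) := by
      ext x
      simp [mem_translate_iff hzz, mul_assoc, hzz, -Set.image_mul_right]
    refine ⟨⟨?_, fun g hg => by rw [hcoset]; exact h2 g hg⟩, by rw [hdiff, h0], ?_⟩
    · rw [hN, Set.ncard_image_of_injective _ (mul_left_injective z), h0]
    · rw [hdiff', Set.ncard_image_of_injective _ (mul_left_injective z), hdiff, h0]
end

section
/- Let K be a finite group of order v, let P ⊆ K be a (v,k,β−1,β) partial sum set with 1 ∉ P, let G = K × C₂ where C₂ = {1, z} is the cyclic group of order 2, and identify K with K × {1} ⊆ G. Set S = P ∪ Pz ⊆ G. Then S is a (2v, 2k, 2β−2, 2β) partial sum set in G if and only if |P ∩ P^{(-1)}| = β. Consequently, when |P ∩ P^{(-1)}| = β, both S ∪ {1} and S ∪ {z} are (2v, 2k+1, 2β) sum sets in G, each type 2 with respect to the normal subgroup N = {1, z}. -/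
/-!
The set `S = P ∪ Pz` is the full preimage of `P` under the projection `K × C₂ → K`, so each
representation of `a` over `P` lifts to exactly two representations of `(a, c)` over `S`, one for
each choice of the `C₂`-coordinate of the first factor (`sumReps_preimage_fst`). Hence `S` inherits
the partial sum set equations at every `g` with nontrivial `K`-coordinate, and the only remaining
nonidentity element is `z`, which lies outside `S` and has `2 |P ∩ P⁻¹|` representations
(`sumReps_one`). This is the equivalence.

If `t` is a central element outside `S` with `t² = 1`, adjoining `t` to `S` creates, for `g ≠ 1`,
exactly the two new representations `t · tg` and `tg · t` when `tg ∈ S`, and none otherwise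
(`sumReps_union_singleton`). For `t ∈ {1, z}` the condition `tg ∈ S` is just `g ∈ S`, so the count
`2β - 2` on `S` is raised to `2β`.

Subtraction being truncated, the case `β = 0` is separate: then every product of two elements of `P`
is `1`, so any element of `P` lies in `P ∩ P⁻¹`, and `|P ∩ P⁻¹| = β` forces `P = ∅`.
-/

open scoped Pointwise

lemma sumReps_one {K : Type*} [Group K] (P : Set K) : sumReps P 1 = (P ∩ P⁻¹).ncard := by
  have h : {p : K × K | p.1 ∈ P ∧ p.2 ∈ P ∧ p.1 * p.2 = 1} = (fun a => (a, a⁻¹)) '' (P ∩ P⁻¹) := by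
    ext ⟨a, b⟩
    simp only [Set.mem_ofPred_eq, Set.mem_image, Set.mem_inter_iff, Set.mem_inv, Prod.mk.injEq]
    constructor
    · rintro ⟨ha, hb, hab⟩
      have : a⁻¹ = b := inv_eq_of_mul_eq_one_right hab
      exact ⟨a, ⟨ha, this ▸ hb⟩, rfl, this⟩
    · rintro ⟨x, ⟨hx, hx'⟩, rfl, rfl⟩
      exact ⟨hx, hx', mul_inv_cancel x⟩
  unfold sumReps
  rw [h, Set.ncard_image_of_injective]
  intro a b hab
  exact (Prod.mk.inj hab).1

lemma sumReps_preimage_fst {K C : Type*} [Group K] [Group C] (P : Set K) (g : K × C) :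
    sumReps (Prod.fst ⁻¹' P : Set (K × C)) g = sumReps P g.1 * Nat.card C := by
  have h : {p : (K × C) × (K × C) | p.1 ∈ Prod.fst ⁻¹' P ∧ p.2 ∈ Prod.fst ⁻¹' P ∧ p.1 * p.2 = g}
      = (fun q : (K × K) × C => ((q.1.1, q.2), (q.1.2, q.2⁻¹ * g.2))) ''
        ({p : K × K | p.1 ∈ P ∧ p.2 ∈ P ∧ p.1 * p.2 = g.1} ×ˢ (Set.univ : Set C)) := by
    ext ⟨⟨a, c⟩, ⟨b, d⟩⟩
    obtain ⟨g, e⟩ := g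
    simp only [Set.mem_ofPred_eq, Set.mem_image, Set.mem_preimage, Set.mem_prod, Set.mem_univ,
      and_true, Prod.mk_mul_mk, Prod.mk.injEq]
    constructor
    · rintro ⟨ha, hb, hab, hcd⟩
      exact ⟨((a, b), c), ⟨ha, hb, hab⟩, ⟨rfl, rfl⟩, rfl, by simp [← hcd]⟩
    · rintro ⟨⟨⟨x, y⟩, w⟩, ⟨hx, hy, hxy⟩, ⟨rfl, rfl⟩, rfl, rfl⟩
      exact ⟨hx, hy, hxy, by simp⟩
  unfold sumReps
  rw [h, Set.ncard_image_of_injective, Set.ncard_prod, Set.ncard_univ]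
  rintro ⟨⟨a, b⟩, c⟩ ⟨⟨a', b'⟩, c'⟩ hab
  simp only [Prod.mk.injEq] at hab ⊢
  exact ⟨⟨hab.1.1, hab.2.1⟩, hab.1.2⟩

open Classical in
lemma sumReps_union_singleton {G : Type*} [Group G] [Finite G] (S : Set G) (t : G)
    (htS : t ∉ S) (htt : t * t = 1) (htc : ∀ g, g * t = t * g) (g : G) (hg : g ≠ 1) :
    sumReps (S ∪ {t}) g = sumReps S g + if t * g ∈ S then 2 else 0 := by
  have key : ∀ x, t * x = g ↔ x = t * g := fun x => by
    constructor
    · rintro rfl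
      rw [← mul_assoc, htt, one_mul]
    · rintro rfl
      rw [← mul_assoc, htt, one_mul]
  unfold sumReps
  split_ifs with h
  · have hne : t ≠ t * g := fun e => htS (e ▸ h)
    have hset : {p : G × G | p.1 ∈ S ∪ {t} ∧ p.2 ∈ S ∪ {t} ∧ p.1 * p.2 = g}
        = {p : G × G | p.1 ∈ S ∧ p.2 ∈ S ∧ p.1 * p.2 = g} ∪ {(t, t * g), (t * g, t)} := by
      ext ⟨a, b⟩
      simp only [Set.mem_ofPred_eq, Set.mem_union, Set.mem_singleton_iff, Set.mem_insert_iff,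
        Prod.mk.injEq]
      constructor
      · rintro ⟨ha | rfl, hb | rfl, hab⟩
        · exact Or.inl ⟨ha, hb, hab⟩
        · rw [htc, key] at hab
          exact Or.inr (Or.inr ⟨hab, rfl⟩)
        · rw [key] at hab
          exact Or.inr (Or.inl ⟨rfl, hab⟩)
        · exact absurd (hab.symm.trans htt) hg
      · rintro (⟨ha, hb, hab⟩ | ⟨rfl, rfl⟩ | ⟨rfl, rfl⟩)
        · exact ⟨Or.inl ha, Or.inl hb, hab⟩
        · exact ⟨Or.inr rfl, Or.inl h, (key _).2 rfl⟩
        · exact ⟨Or.inl h, Or.inr rfl, by rw [htc, key]⟩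
    rw [hset, Set.ncard_union_eq, Set.ncard_pair]
    · intro e
      exact hne (Prod.mk.inj e).1
    · rw [Set.disjoint_right]
      rintro ⟨a, b⟩ hab ⟨ha, hb, -⟩
      simp only [Set.mem_singleton_iff, Set.mem_insert_iff, Prod.mk.injEq] at hab
      rcases hab with ⟨rfl, -⟩ | ⟨-, rfl⟩
      · exact htS ha
      · exact htS hb
  · rw [add_zero]
    congr 1
    ext ⟨a, b⟩
    simp only [Set.mem_ofPred_eq, Set.mem_union, Set.mem_singleton_iff]
    constructor
    · rintro ⟨ha | rfl, hb | rfl, hab⟩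
      · exact ⟨ha, hb, hab⟩
      · rw [htc, key] at hab
        exact absurd (hab ▸ ha) h
      · rw [key] at hab
        exact absurd (hab ▸ hb) h
      · exact absurd (hab.symm.trans htt) hg
    · rintro ⟨ha, hb, hab⟩
      exact ⟨Or.inl ha, Or.inl hb, hab⟩

/-- A partial sum set with `λ = μ - 2` and `μ` even becomes a sum set on adjoining `t`. Here
`hpos` excludes truncation in `2 * b - 2`. -/
lemma isSumSet_union_singleton {G : Type*} [Group G] [Finite G] (S : Set G) (t : G) (b : ℕ)
    (hS : IsPartialSumSet S (2 * b - 2) (2 * b)) (hpos : S.Nonempty → 0 < b)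
    (htS : t ∉ S) (htt : t * t = 1) (htc : ∀ g, g * t = t * g) (hinv : ∀ g, t * g ∈ S ↔ g ∈ S) :
    IsSumSet (S ∪ {t}) (2 * b) := by
  classical
  intro g hg
  rw [sumReps_union_singleton S t htS htt htc g hg, hinv]
  split_ifs with h
  · have := hpos ⟨g, h⟩
    rw [hS.1 g h hg]
    omega
  · rw [hS.2 g h hg, add_zero]

lemma isType2_union_singleton {G : Type*} [Group G] (S : Set G) (t z : G)
    (hz1 : z ≠ 1) (h1 : 1 ∉ S) (hz : z ∉ S) (ht : t = 1 ∨ t = z) (hzz : z * z = 1)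
    (hinv : ∀ g, g * z ∈ S ↔ g ∈ S) : IsType2 (S ∪ {t}) z := by
  constructor
  · have : (S ∪ {t}) ∩ {1, z} = {t} := by
      ext x
      simp only [Set.mem_inter_iff, Set.mem_union, Set.mem_singleton_iff, Set.mem_insert_iff]
      constructor
      · rintro ⟨hx | hx, rfl | rfl⟩
        · exact absurd hx h1
        · exact absurd hx hz
        · exact hx
        · exact hx
      · rintro rfl
        exact ⟨Or.inr rfl, ht⟩
    rw [this, Set.ncard_singleton]
  · intro g hg
    simp only [Set.mem_singleton_iff, Set.mem_insert_iff, not_or] at hg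
    have hgt : g ≠ t := by
      rcases ht with rfl | rfl
      · exact hg.1
      · exact hg.2
    have hgzt : g * z ≠ t := by
      intro e
      have e' : g = t * z := by rw [← e, mul_assoc, hzz, mul_one]
      rcases ht with rfl | rfl
      · exact hg.2 (by rw [e', one_mul])
      · exact hg.1 (by rw [e', hzz])
    by_cases h : g ∈ S
    · right
      have : (S ∪ {t}) ∩ {g, g * z} = {g, g * z} := by
        rw [Set.inter_eq_right]
        rintro x (rfl | rfl)
        · exact Or.inl h
        · exact Or.inl ((hinv g).2 h)
      rw [this, Set.ncard_pair]
      intro e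
      exact hz1 (mul_eq_left.1 e.symm)
    · left
      have : (S ∪ {t}) ∩ {g, g * z} = ∅ := by
        rw [Set.eq_empty_iff_forall_notMem]
        rintro x ⟨hx | hx, rfl | rfl⟩
        · exact h hx
        · exact h ((hinv g).1 hx)
        · exact hgt hx
        · exact hgzt hx
      rw [this, Set.ncard_empty]

/-- If `β = 0`, then `P ∩ P⁻¹ = ∅` forces `P = ∅`: for `a ∈ P`, the product `a * a` has a
representation, so it must be `1`. -/
lemma pos_of_nonempty {K : Type*} [Group K] [Finite K] (P : Set K) (b : ℕ)
    (hP : IsPartialSumSet P (b - 1) b) (hb : (P ∩ P⁻¹).ncard = b) (hne : P.Nonempty) : 0 < b := by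
  obtain ⟨a, ha⟩ := hne
  by_contra h0
  obtain rfl : b = 0 := by omega
  have haa : a * a = 1 := by
    by_contra hne
    have h : sumReps P (a * a) = 0 := by
      by_cases hm : a * a ∈ P
      · exact hP.1 _ hm hne
      · exact hP.2 _ hm hne
    unfold sumReps at h
    rw [Set.ncard_eq_zero (Set.toFinite _)] at h
    exact Set.notMem_empty (a, a) (h ▸ ⟨ha, ha, rfl⟩)
  rw [Set.ncard_eq_zero (Set.toFinite _)] at hb
  refine Set.notMem_empty a (hb ▸ ⟨ha, ?_⟩)
  rwa [Set.mem_inv, inv_eq_of_mul_eq_one_right haa]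

theorem stmt_13 {K : Type*} [Group K] [Finite K]
    (P : Set K) (beta : ℕ) (hP : IsPartialSumSet P (beta - 1) beta) (h1 : (1 : K) ∉ P)
    (z : K × Multiplicative (ZMod 2))
    (hz : z = ((1 : K), Multiplicative.ofAdd (1 : ZMod 2)))
    (S : Set (K × Multiplicative (ZMod 2)))
    (hS : S = (fun a => ((a, 1) : K × Multiplicative (ZMod 2))) '' P ∪ (· * z) '' ((fun a => ((a, 1) : K × Multiplicative (ZMod 2))) '' P)) :
    S.ncard = 2 * P.ncard ∧
      (IsPartialSumSet S (2 * beta - 2) (2 * beta) ↔ (P ∩ P⁻¹).ncard = beta) ∧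
      ((P ∩ P⁻¹).ncard = beta →
        ((S ∪ {1}).ncard = 2 * P.ncard + 1 ∧ IsSumSet (S ∪ {1}) (2 * beta) ∧
            IsType2 (S ∪ {1}) z) ∧
          ((S ∪ {z}).ncard = 2 * P.ncard + 1 ∧ IsSumSet (S ∪ {z}) (2 * beta) ∧
            IsType2 (S ∪ {z}) z)) := by
  have hC : ∀ c : Multiplicative (ZMod 2), c = 1 ∨ c = Multiplicative.ofAdd (1 : ZMod 2) := by
    decide
  have hcard : Nat.card (Multiplicative (ZMod 2)) = 2 := by
    rw [Nat.card_congr Multiplicative.toAdd, Nat.card_zmod]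
  have hSpre : S = Prod.fst ⁻¹' P := by
    subst hS hz
    ext ⟨a, c⟩
    simp only [Set.mem_union, Set.mem_image, Set.mem_preimage, Prod.mk.injEq]
    constructor
    · rintro (⟨x, hx, rfl, -⟩ | ⟨-, ⟨x, hx, rfl⟩, h⟩)
      · exact hx
      · simp only [Prod.mk_mul_mk, mul_one, Prod.mk.injEq] at h
        exact h.1 ▸ hx
    · intro ha
      rcases hC c with rfl | rfl
      · exact Or.inl ⟨a, ha, rfl, rfl⟩
      · exact Or.inr ⟨(a, 1), ⟨a, ha, rfl⟩, by simp⟩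
  clear hS
  have hz1 : z ≠ 1 := by
    rintro rfl
    have h : (1 : Multiplicative (ZMod 2)) ≠ Multiplicative.ofAdd 1 := by decide
    exact h (congrArg Prod.snd hz)
  have hzz : z * z = 1 := by
    have h : Multiplicative.ofAdd (1 : ZMod 2) * Multiplicative.ofAdd 1 = 1 := by decide
    rw [hz, Prod.mk_mul_mk, mul_one, h, Prod.mk_one_one]
  have hzc : ∀ g, g * z = z * g := by
    rintro ⟨a, c⟩
    rw [hz, Prod.mk_mul_mk, Prod.mk_mul_mk, mul_one, one_mul, mul_comm]
  have hinv : ∀ g, g * z ∈ S ↔ g ∈ S := by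
    rintro ⟨a, c⟩
    rw [hSpre, hz]
    simp
  have h1S : (1 : K × Multiplicative (ZMod 2)) ∉ S := by
    rw [hSpre]
    exact h1
  have hzS : z ∉ S := by
    rw [hSpre, hz]
    exact h1
  have hreps : ∀ g, sumReps S g = 2 * sumReps P g.1 := by
    intro g
    rw [hSpre, sumReps_preimage_fst, hcard, mul_comm]
  have hSc : S.ncard = 2 * P.ncard := by
    rw [hSpre, ← Set.prod_univ, Set.ncard_prod, Set.ncard_univ, hcard, mul_comm]
  have hiff : IsPartialSumSet S (2 * beta - 2) (2 * beta) ↔ (P ∩ P⁻¹).ncard = beta := by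
    constructor
    · intro h
      have := h.2 z hzS hz1
      rw [hreps, hz, sumReps_one] at this
      omega
    · intro h
      constructor
      · intro g hg _
        have hg' : g.1 ∈ P := by rwa [hSpre] at hg
        rw [hreps, hP.1 g.1 hg' (fun e => h1 (e ▸ hg'))]
        omega
      · intro g hg _
        have hg' : g.1 ∉ P := by rwa [hSpre] at hg
        rw [hreps]
        by_cases e : g.1 = 1
        · rw [e, sumReps_one, h]
        · rw [hP.2 g.1 hg' e]
  refine ⟨hSc, hiff, fun h => ?_⟩
  have hpos : S.Nonempty → 0 < beta := by
    rintro ⟨g, hg⟩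
    exact pos_of_nonempty P beta hP h ⟨g.1, by rwa [hSpre] at hg⟩
  have hun : ∀ t, t ∉ S → (S ∪ {t}).ncard = 2 * P.ncard + 1 := by
    intro t ht
    rw [Set.union_singleton, Set.ncard_insert_of_notMem ht (Set.toFinite _), hSc]
  exact ⟨⟨hun 1 h1S,
      isSumSet_union_singleton S 1 beta (hiff.2 h) hpos h1S (one_mul 1) (by simp) (by simp),
      isType2_union_singleton S 1 z hz1 h1S hzS (Or.inl rfl) hzz hinv⟩,
    ⟨hun z hzS,
      isSumSet_union_singleton S z beta (hiff.2 h) hpos hzS hzz hzc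
        (fun g => by rw [← hzc, hinv]),
      isType2_union_singleton S z z hz1 h1S hzS (Or.inr rfl) hzz hinv⟩⟩
end

section
/- Let n ≥ 4 be even, let D_n = ⟨x, t | xⁿ = t² = 1, txt = x^{-1}⟩ be the dihedral group of order 2n, let C_n = ⟨x⟩, and let z = x^{n/2}. Let M ⊆ C_n be a subset with M ∩ M^{(-1)} = ∅ that contains exactly one element from each coset of ⟨z⟩ in C_n other than ⟨z⟩ itself, and with M ∩ ⟨z⟩ = ∅ (so |M| = (n−2)/2). Set S = M ∪ Mt. Then both S ∪ {t} and S ∪ {zt} are (2n, n−1, (n−2)/2) sum sets in D_n, type 1 with respect to the center Z(D_n) = {1, z}. -/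
/-!
Write `z = r m` with `m = n / 2`, let `A ⊆ ZMod n` be the set of exponents of `M`, and let `f` be
its indicator. Exactly one of `a`, `a + m` lies in `A` when `a ∉ {0, m}`, and skewness then forces
`M⁻¹ = z M`, i.e. `f (-a) = f (a + m)`.

In the group ring, with `C` the sum of the rotations and `w ∈ {1, z}`, the set
`T = M + M t + w t` satisfies
`T² = (M + w) (M + M⁻¹) (1 + t) + 1`, where `M + M⁻¹ = M (1 + z) = C - 1 - z`. Since
`M (C - 1 - z) = (|M| - 1) C + 1 + z` and `w (C - 1 - z) = C - 1 - z`, this is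
`T² = |M| C (1 + t) + 1`: every nonidentity element has exactly `|M| = (n - 2) / 2`
factorizations. `conv_rotation` and `conv_reflection` are this identity read coefficientwise, as
convolutions over `ZMod n`; `sumSet_of_skew_transversal` assembles them.
-/

open scoped Pointwise

open DihedralGroup in
/-- A sum over the dihedral group splits into its rotation part and its reflection part. -/
theorem dihedral_sum (n : ℕ) [NeZero n] (φ : DihedralGroup n → ℤ) :
    ∑ g, φ g = ∑ a : ZMod n, φ (r a) + ∑ a : ZMod n, φ (sr a) := by
  rw [← equivSum.symm.sum_comp, Fintype.sum_sum_type]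
  rfl

/-- The number of factorizations of `g` in `T` is the convolution at `g` of the indicator
function of `T` with itself. -/
theorem sumReps_eq_sum_s15 {G : Type*} [Group G] [Fintype G] (T : Set G) (χ : G → ℤ)
    (h1 : ∀ g ∈ T, χ g = 1) (h0 : ∀ g, g ∉ T → χ g = 0) (g : G) :
    (sumReps T g : ℤ) = ∑ h, χ h * χ (h⁻¹ * g) := by
  classical
  have hset : {p : G × G | p.1 ∈ T ∧ p.2 ∈ T ∧ p.1 * p.2 = g} =
      (fun h => (h, h⁻¹ * g)) '' {h | h ∈ T ∧ h⁻¹ * g ∈ T} := by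
    ext ⟨a, b⟩
    simp only [Set.mem_ofPred_eq, Set.mem_image, Prod.mk.injEq]
    constructor
    · rintro ⟨ha, hb, rfl⟩
      exact ⟨a, by simpa using ⟨ha, hb⟩, rfl, by simp⟩
    · rintro ⟨h, ⟨ha, hb⟩, rfl, rfl⟩
      exact ⟨ha, hb, by simp⟩
  rw [sumReps, hset, Set.ncard_image_of_injective _ (fun a b h => (Prod.mk.inj h).1),
    Set.ncard_eq_toFinset_card', Finset.card_eq_sum_ones, Nat.cast_sum, Set.toFinset_ofPred,
    Finset.sum_filter]
  refine Finset.sum_congr rfl fun h _ => ?_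
  by_cases ha : h ∈ T <;> by_cases hb : h⁻¹ * g ∈ T <;> simp [ha, hb, h1, h0]

theorem ncard_eq_sum {G : Type*} [Fintype G] (T : Set G) (χ : G → ℤ)
    (h1 : ∀ g ∈ T, χ g = 1) (h0 : ∀ g, g ∉ T → χ g = 0) :
    (T.ncard : ℤ) = ∑ h, χ h := by
  classical
  have : T = {h | h ∈ T} := rfl
  rw [this, Set.ncard_eq_toFinset_card', Finset.card_eq_sum_ones, Nat.cast_sum,
    Set.toFinset_ofPred, Finset.sum_filter]
  refine Finset.sum_congr rfl fun h _ => ?_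
  by_cases ha : h ∈ T <;> simp [ha, h1, h0]

/-- The dihedral convolution at the rotation by `g`. Here `f` is the indicator of `M`,
`f (a + m) + [a = c]` is the indicator of the reflection part, and the hypotheses on `f`
say that `M⁻¹ = z M` and that `M` is a transversal of the nontrivial cosets of `⟨z⟩`. -/
theorem conv_rotation {n : ℕ} [NeZero n] (m c : ZMod n) (hmm : m + m = 0) (hm : m ≠ 0)
    (hc : c = 0 ∨ c = m) (f : ZMod n → ℤ)
    (hneg : ∀ a, f (-a) = f (a + m))
    (hpair : ∀ a, f a + f (a + m) = 1 - (if a = 0 then 1 else 0) - (if a = m then 1 else 0))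
    (g : ZMod n) (hg : g ≠ 0) :
    ∑ a, f a * f (-a + g) +
      ∑ a, (f (a + m) + if a = c then 1 else 0) * (f (a + g + m) + if a + g = c then 1 else 0)
      = ∑ a, f a := by
  have e1 : ∑ a, f a * f (-a + g) = ∑ a, f (a + g) * f (a + m) := by
    rw [← Equiv.sum_comp (Equiv.addRight g)]
    refine Finset.sum_congr rfl fun a _ => ?_
    simp only [Equiv.coe_addRight]
    rw [← hneg]; congr 2; ring
  have e2 : ∑ a, f (a + m) * f (a + g + m) = ∑ a, f (a + g) * f a := by
    rw [← Equiv.sum_comp (Equiv.addRight m)]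
    refine Finset.sum_congr rfl fun a _ => ?_
    simp only [Equiv.coe_addRight]
    rw [show a + m + m = a by rw [add_assoc, hmm, add_zero],
      show a + m + g + m = a + g by linear_combination hmm, mul_comm]
  have e3 : ∑ a, f (a + g) * (f a + f (a + m)) = ∑ a, f a - f g - f (g + m) := by
    rw [← Equiv.sum_comp (Equiv.addRight g) f]
    simp [hpair, mul_sub, Finset.sum_sub_distrib, add_comm g m]
  have e4 : ∑ a, (f (a + m) + if a = c then 1 else 0) * (f (a + g + m) + if a + g = c then 1 else 0)
      = ∑ a, f (a + m) * f (a + g + m) + f (c - g + m) + f (c + g + m) := by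
    have : ∀ a, (f (a + m) + if a = c then 1 else 0) *
        (f (a + g + m) + if a + g = c then 1 else 0) = f (a + m) * f (a + g + m)
        + (if a = c - g then f (a + m) else 0) + if a = c then f (a + g + m) else 0 := by
      intro a
      by_cases h1 : a = c
      · have : ¬ a + g = c := by rw [h1]; simpa using hg
        have h' : ¬ a = c - g := fun h => this (by rw [h]; ring)
        simp only [h1] at *
        simp [this, h']; ring
      · by_cases h2 : a = c - g
        · have : a + g = c := by rw [h2]; ring
          simp only [if_neg h1, if_pos h2, if_pos this]; ring
        · have : ¬ a + g = c := fun h => h2 (by rw [← h]; ring)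
          simp only [if_neg h1, if_neg h2, if_neg this]; ring
    simp only [this, Finset.sum_add_distrib, Finset.sum_ite_eq', Finset.mem_univ, if_true]
  have e5 : f (c - g + m) + f (c + g + m) = f g + f (g + m) := by
    rw [← hneg]
    rcases hc with rfl | rfl
    · simp
    · rw [show -(c - g) = g + c by linear_combination -hmm,
        show c + g + c = g by linear_combination hmm]; ring
  rw [e4, e1, e2]
  simp only [mul_add, Finset.sum_add_distrib] at e3
  linarith

/-- The dihedral convolution at the reflection with index `g`; notation as in
`conv_rotation`. -/
theorem conv_reflection {n : ℕ} [NeZero n] (m c : ZMod n) (hmm : m + m = 0)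
    (hc : c = 0 ∨ c = m) (f : ZMod n → ℤ)
    (hneg : ∀ a, f (-a) = f (a + m))
    (hpair : ∀ a, f a + f (a + m) = 1 - (if a = 0 then 1 else 0) - (if a = m then 1 else 0))
    (g : ZMod n) :
    ∑ a, f a * (f (a + g + m) + if a + g = c then 1 else 0) +
      ∑ a, (f (a + m) + if a = c then 1 else 0) * f (g - a)
      = ∑ a, f a := by
  have e1 : ∑ a, f (a + m) * f (g - a) = ∑ a, f (a + g) * f a := by
    rw [← Equiv.sum_comp (Equiv.addRight (g + m))]
    refine Finset.sum_congr rfl fun a _ => ?_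
    simp only [Equiv.coe_addRight]
    rw [show a + (g + m) + m = a + g by linear_combination hmm,
      show g - (a + (g + m)) = -(a + m) by ring, hneg,
      show a + m + m = a by rw [add_assoc, hmm, add_zero]]
  have e2 : ∑ a, f a * f (a + g + m) = ∑ a, f (a + g) * f (a + m) := by
    rw [← Equiv.sum_comp (Equiv.addRight m)]
    refine Finset.sum_congr rfl fun a _ => ?_
    simp only [Equiv.coe_addRight]
    rw [show a + m + g + m = a + g by linear_combination hmm, mul_comm]
  have e3 : ∑ a, f (a + g) * (f a + f (a + m)) = ∑ a, f a - f g - f (g + m) := by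
    rw [← Equiv.sum_comp (Equiv.addRight g) f]
    simp [hpair, mul_sub, Finset.sum_sub_distrib, add_comm g m]
  have e4 : ∑ a, f a * (if a + g = c then 1 else 0) = f (c - g) := by
    simp [← eq_sub_iff_add_eq]
  have e5 : ∑ a, (if a = c then 1 else 0) * f (g - a) = f (g - c) := by
    simp
  have e6 : f (c - g) + f (g - c) = f g + f (g + m) := by
    rw [show c - g = -(g - c) by ring, hneg]
    rcases hc with rfl | rfl
    · simp [add_comm]
    · rw [show g - c + c = g by ring, show g - c = g + c by linear_combination -hmm]
  simp only [mul_add, add_mul, Finset.sum_add_distrib] at e3 ⊢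
  linarith

open DihedralGroup in
/-- Cardinality, the sum set property and type 1 for a set `T` whose rotations are indexed by `A` and whose reflections
are indexed by `(A + m) ∪ {c}`, with `c ∈ {0, m}`. -/
theorem sumSet_of_skew_transversal {n : ℕ} [NeZero n] (hn : 4 ≤ n) (m c : ZMod n)
    (hmm : m + m = 0) (hm : m ≠ 0) (hc : c = 0 ∨ c = m) (A : Set (ZMod n))
    (h0A : 0 ∉ A) (hmA : m ∉ A)
    (hneg : ∀ a, -a ∈ A ↔ a + m ∈ A)
    (hpair : ∀ a, a ≠ 0 → a ≠ m → (a ∈ A ↔ a + m ∉ A))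
    (T : Set (DihedralGroup n)) (hr : ∀ a, r a ∈ T ↔ a ∈ A)
    (hsr : ∀ a, sr a ∈ T ↔ a + m ∈ A ∨ a = c) :
    T.ncard = n - 1 ∧ IsSumSet T ((n - 2) / 2) ∧ IsType1 T (r m) := by
  classical
  set f : ZMod n → ℤ := fun a => if a ∈ A then 1 else 0 with hf
  have hfneg : ∀ a, f (-a) = f (a + m) := fun a => by simp only [hf, hneg]
  have hfpair : ∀ a, f a + f (a + m) =
      1 - (if a = 0 then 1 else 0) - (if a = m then 1 else 0) := by
    intro a
    by_cases h0 : a = 0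
    · subst h0; simp [hf, h0A, hmA, hm.symm]
    by_cases h1 : a = m
    · subst h1; simp [hf, h0A, hmA, hmm, h0]
    have := hpair a h0 h1
    by_cases h2 : a + m ∈ A <;> simp [hf, this, h0, h1, h2]
  have hcm : c + m ∉ A := by
    rcases hc with rfl | rfl
    · simpa using hmA
    · rwa [hmm]
  let χ : DihedralGroup n → ℤ := fun g => match g with
    | r a => f a
    | sr a => f (a + m) + if a = c then 1 else 0
  have hχ1 : ∀ g ∈ T, χ g = 1 := by
    rintro (a | a) h
    · simp [χ, hf, (hr a).1 h]
    · rcases (hsr a).1 h with h | h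
      · have : a ≠ c := by rintro rfl; exact hcm h
        simp [χ, hf, h, this]
      · simp [χ, hf, h, hcm]
  have hχ0 : ∀ g, g ∉ T → χ g = 0 := by
    rintro (a | a) h
    · simp [χ, hf, mt (hr a).2 h]
    · have := mt (hsr a).2 h
      push Not at this
      simp [χ, hf, this]
  have hcard : 2 * ∑ a, f a = n - 2 := by
    have h1 : ∑ a, (f a + f (a + m)) = n - 2 := by
      simp only [hfpair, Finset.sum_sub_distrib, Finset.sum_ite_eq', Finset.mem_univ, if_true]
      simp [ZMod.card]; ring
    have h2 := Equiv.sum_comp (Equiv.addRight m) f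
    simp only [Equiv.coe_addRight] at h2
    rw [Finset.sum_add_distrib, h2] at h1
    linarith
  refine ⟨?_, ?_, ?_, ?_⟩
  · have h := ncard_eq_sum T χ hχ1 hχ0
    rw [dihedral_sum] at h
    have h2 := Equiv.sum_comp (Equiv.addRight m) f
    simp only [Equiv.coe_addRight] at h2
    simp only [χ, Finset.sum_add_distrib, Finset.sum_ite_eq', Finset.mem_univ, if_true, h2] at h
    omega
  · intro g hg
    have h := sumReps_eq_sum_s15 T χ hχ1 hχ0 g
    rw [dihedral_sum] at h
    suffices (sumReps T g : ℤ) = ∑ a, f a by omega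
    rw [h]
    rcases g with g | g
    · have hg0 : g ≠ 0 := by rintro rfl; exact hg rfl
      simpa [χ, add_comm, add_left_comm] using conv_rotation m c hmm hm hc f hfneg hfpair g hg0
    · simpa [χ, add_comm, add_left_comm] using conv_reflection m c hmm hc f hfneg hfpair g
  · ext g
    simp only [Set.mem_inter_iff, Set.mem_insert_iff, Set.mem_singleton_iff,
      Set.mem_empty_iff_false, iff_false]
    rintro ⟨h, rfl | rfl⟩
    · exact h0A ((hr 0).1 h)
    · exact hmA ((hr m).1 h)
  · intro g
    have hnot : ¬ (g ∈ T ∧ g * r m ∈ T) := by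
      rintro ⟨h1, h2⟩
      rcases g with a | a
      · rw [r_mul_r, hr] at h2
        rw [hr] at h1
        have h3 : a ≠ 0 := by rintro rfl; exact h0A h1
        have h4 : a ≠ m := by rintro rfl; exact hmA h1
        exact (hpair a h3 h4).1 h1 h2
      · rw [sr_mul_r, hsr, add_assoc, hmm, add_zero] at h2
        rw [hsr] at h1
        by_cases h3 : a = 0
        · subst h3
          simp only [zero_add, h0A, hmA, false_or] at h1 h2
          exact hm (h2.trans h1.symm)
        by_cases h4 : a = m
        · subst h4
          simp only [hmm, h0A, hmA, false_or] at h1 h2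
          exact hm (h1.trans h2.symm)
        have h5 : a ≠ c := by rcases hc with rfl | rfl <;> assumption
        have h6 : a + m ≠ c := by
          intro h
          rcases hc with rfl | rfl
          · exact h4 (by linear_combination h - hmm)
          · exact h3 (by simpa using h)
        simp only [h5, h6, or_false] at h1 h2
        exact (hpair a h3 h4).1 h2 h1
    rw [Set.ncard_le_one_iff]
    rintro x y ⟨hx, hx'⟩ ⟨hy, hy'⟩
    simp only [Set.mem_insert_iff, Set.mem_singleton_iff] at hx' hy'
    rcases hx' with rfl | rfl <;> rcases hy' with rfl | rfl
    · rfl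
    · exact absurd ⟨hx, hy⟩ hnot
    · exact absurd ⟨hy, hx⟩ hnot
    · rfl

theorem stmt_15 (n : ℕ) (hn : 4 ≤ n) (heven : Even n)
    (M : Set (DihedralGroup n))
    (hMC : M ⊆ Set.range DihedralGroup.r)
    (hskew : M ∩ M⁻¹ = ∅)
    (hMz : M ∩ {1, DihedralGroup.r ((n / 2 : ℕ) : ZMod n)} = ∅)
    (hcoset : ∀ i : ZMod n, i ≠ 0 → i ≠ ((n / 2 : ℕ) : ZMod n) →
      (M ∩ {DihedralGroup.r i, DihedralGroup.r (i + ((n / 2 : ℕ) : ZMod n))}).ncard = 1)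
    (S : Set (DihedralGroup n)) (hS : S = M ∪ (· * DihedralGroup.sr 0) '' M) :
    ((S ∪ {DihedralGroup.sr 0}).ncard = n - 1 ∧
        IsSumSet (S ∪ {DihedralGroup.sr 0}) ((n - 2) / 2) ∧
        IsType1 (S ∪ {DihedralGroup.sr 0}) (DihedralGroup.r ((n / 2 : ℕ) : ZMod n))) ∧
      ((S ∪ {DihedralGroup.r ((n / 2 : ℕ) : ZMod n) * DihedralGroup.sr 0}).ncard = n - 1 ∧
        IsSumSet (S ∪ {DihedralGroup.r ((n / 2 : ℕ) : ZMod n) * DihedralGroup.sr 0}) ((n - 2) / 2) ∧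
        IsType1 (S ∪ {DihedralGroup.r ((n / 2 : ℕ) : ZMod n) * DihedralGroup.sr 0})
          (DihedralGroup.r ((n / 2 : ℕ) : ZMod n))) := by
  have : NeZero n := ⟨by omega⟩
  set m : ZMod n := ((n / 2 : ℕ) : ZMod n) with hmdef
  have hmm : m + m = 0 := by
    rw [hmdef, ← Nat.cast_add, ← two_mul, Nat.mul_div_cancel' heven.two_dvd]
    exact ZMod.natCast_self n
  have hm : m ≠ 0 := by
    rw [hmdef, Ne, ZMod.natCast_eq_zero_iff]
    intro h
    have := Nat.le_of_dvd (by omega) h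
    omega
  set A : Set (ZMod n) := {a | DihedralGroup.r a ∈ M} with hA
  have h0A : (0 : ZMod n) ∉ A := fun h => by
    have : (DihedralGroup.r 0 : DihedralGroup n) ∈ M ∩ {1, DihedralGroup.r m} := ⟨h, Or.inl rfl⟩
    rwa [hMz] at this
  have hmA : m ∉ A := fun h => by
    have : (DihedralGroup.r m : DihedralGroup n) ∈ M ∩ {1, DihedralGroup.r m} := ⟨h, Or.inr rfl⟩
    rwa [hMz] at this
  have hsk : ∀ a, a ∈ A → -a ∉ A := fun a h h' => by
    have : (DihedralGroup.r a : DihedralGroup n) ∈ M ∩ M⁻¹ := ⟨h, by simpa [A] using h'⟩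
    rwa [hskew] at this
  have hpair : ∀ a, a ≠ 0 → a ≠ m → (a ∈ A ↔ a + m ∉ A) := by
    intro a h0 h1
    obtain ⟨x, hx⟩ := Set.ncard_eq_one.1 (hcoset a h0 h1)
    constructor
    · intro h h'
      have e1 : DihedralGroup.r a ∈ ({x} : Set (DihedralGroup n)) := hx ▸ ⟨h, Or.inl rfl⟩
      have e2 : DihedralGroup.r (a + m) ∈ ({x} : Set (DihedralGroup n)) := hx ▸ ⟨h', Or.inr rfl⟩
      have e3 := DihedralGroup.r.inj ((show DihedralGroup.r a = x from e1).trans (show DihedralGroup.r (a + m) = x from e2).symm)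
      exact hm (by simpa using e3)
    · intro h
      have e1 : x ∈ M ∩ {DihedralGroup.r a, DihedralGroup.r (a + m)} := hx ▸ rfl
      rcases e1 with ⟨e1, rfl | rfl⟩
      · exact e1
      · exact absurd e1 h
  have hnegm : -m = m := by linear_combination -hmm
  -- Inversion maps each nontrivial coset pair to another one, and skewness forces the choice
  -- in the inverse coset, so that `M⁻¹ = z M`.
  have hneg : ∀ a, -a ∈ A ↔ a + m ∈ A := by
    intro a
    by_cases h0 : a = 0
    · subst h0; simp [h0A, hmA]
    by_cases h1 : a = m
    · subst h1; rw [hnegm, hmm]; simp [h0A, hmA]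
    have h2 : -a ≠ 0 := by simpa using h0
    have h3 : -a ≠ m := fun h => h1 (by rw [← hnegm, ← h, neg_neg])
    constructor
    · intro h
      by_contra h'
      exact hsk a ((hpair a h0 h1).2 h') h
    · intro h
      rw [hpair _ h2 h3]
      have := hsk _ h
      rwa [neg_add, hnegm] at this
  have hSr : ∀ a, DihedralGroup.r a ∈ S ↔ a ∈ A := by
    intro a
    rw [hS]
    constructor
    · rintro (h | ⟨x, hx, h⟩)
      · exact h
      · obtain ⟨b, rfl⟩ := hMC hx
        simp at h
    · exact Or.inl
  have hSsr : ∀ a, DihedralGroup.sr a ∈ S ↔ a + m ∈ A := by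
    intro a
    rw [hS, ← hneg]
    constructor
    · rintro (h | ⟨x, hx, h⟩)
      · obtain ⟨b, hb⟩ := hMC h
        simp at hb
      · obtain ⟨b, rfl⟩ := hMC hx
        simp only [DihedralGroup.r_mul_sr, zero_sub, DihedralGroup.sr.injEq] at h
        rwa [← h, neg_neg]
    · intro h
      exact Or.inr ⟨DihedralGroup.r (-a), h, by simp⟩
  refine ⟨sumSet_of_skew_transversal hn m 0 hmm hm (Or.inl rfl) A h0A hmA hneg hpair _ ?_ ?_,
    sumSet_of_skew_transversal hn m m hmm hm (Or.inr rfl) A h0A hmA hneg hpair _ ?_ ?_⟩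
  · intro a; simp [hSr]
  · intro a; simp [hSsr, or_comm]
  · intro a; simp [hSr]
  · intro a; simp [hSsr, hnegm, or_comm]
end

section
/- Let n ≥ 4 be even and let D_n be the dihedral group of order 2n. If D_n contains a (2n, n−1, (n−2)/2) sum set that is type 2 with respect to some normal subgroup of order 2, then n ≡ 2 (mod 4). -/
/-!
Let `N = {1, z}`. A normal subgroup of order two is central, so `(z a) (z b) = a b` for all `a, b`,
and the type 2 hypothesis says that `S \ N` is stable under multiplication by `z`.
Fix `g ∉ N`. On the pairs `(a, b) ∈ S × S` with `a b = g`, the map that swaps the two entries when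
one of them lies in `N`, and sends `(a, b)` to `(z a, z b)` otherwise, is an involution. It has no
fixed point: `a = b ∈ N` would give `g ∈ N`, and `z ≠ 1`. Hence the number `(n - 2) / 2` of
representations of `g` is even, which for even `n` means `n ≡ 2 (mod 4)`.
-/

open scoped Pointwise

/-- A normal subgroup of order two is `{1, z}` for a central involution `z`. -/
theorem exists_central_involution {G : Type*} [Group G] (N : Subgroup G) [N.Normal]
    (hN : Nat.card N = 2) :
    ∃ z ∈ N, z ≠ 1 ∧ z * z = 1 ∧ (∀ g, g * z = z * g) ∧ ∀ x ∈ N, x = 1 ∨ x = z := by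
  obtain ⟨⟨z, hz⟩, hz1, huniq⟩ := (Nat.card_eq_two_iff' (1 : N)).1 hN
  have hz1' : z ≠ 1 := by simpa [Subtype.ext_iff] using hz1
  have key : ∀ x ∈ N, x ≠ 1 → x = z := fun x hx hx1 ↦
    congrArg Subtype.val (huniq ⟨x, hx⟩ (by simpa [Subtype.ext_iff] using hx1))
  refine ⟨z, hz, hz1', ?_, fun g ↦ ?_, fun x hx ↦ ?_⟩
  · have h := key z⁻¹ (N.inv_mem hz) (by simpa using hz1')
    calc z * z = z⁻¹ * z := by rw [h]
      _ = 1 := by simp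
  · have h := key (g * z * g⁻¹) (Subgroup.Normal.conj_mem inferInstance z hz g) (by
      simpa [mul_inv_eq_one] using hz1')
    exact mul_inv_eq_iff_eq_mul.1 h
  · by_cases h : x = 1
    · exact Or.inl h
    · exact Or.inr (key x hx h)

/-- If `N = {1, z}` for a central involution `z` and `S \ N` is stable under multiplication by `z`,
every `g ∉ N` has an even number of representations as a product of two elements of `S`. -/
theorem even_sumReps {G : Type*} [Group G] [Finite G] (N : Subgroup G) (S : Set G) (z : G)
    (hz : z ∈ N) (hz1 : z ≠ 1) (hzz : z * z = 1) (hzc : ∀ g, g * z = z * g)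
    (hNz : ∀ x ∈ N, x = 1 ∨ x = z) (hS : ∀ a ∈ S, a ∉ N → z * a ∈ S) (g : G) (hg : g ∉ N) :
    Even (sumReps S g) := by
  classical
  have hfin : {p : G × G | p.1 ∈ S ∧ p.2 ∈ S ∧ p.1 * p.2 = g}.Finite := Set.toFinite _
  have hcomm : ∀ x ∈ N, ∀ y, x * y = y * x := by
    intro x hx y
    rcases hNz x hx with rfl | rfl
    · simp
    · exact (hzc y).symm
  have hmem : ∀ a, z * a ∈ N ↔ a ∈ N := fun a ↦ N.mul_mem_cancel_left hz
  have hzza : ∀ a, z * (z * a) = a := fun a ↦ by rw [← mul_assoc, hzz, one_mul]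
  rw [sumReps, Set.ncard_eq_toFinset_card _ hfin, ← ZMod.natCast_eq_zero_iff_even,
    Finset.cast_card]
  refine Finset.sum_involution
    (fun p _ ↦ if p.1 ∈ N ∨ p.2 ∈ N then (p.2, p.1) else (z * p.1, z * p.2)) ?_ ?_ ?_ ?_
  · intro p _
    decide
  · rintro ⟨a, b⟩ hp _
    simp only [Set.Finite.mem_toFinset, Set.mem_ofPred_eq] at hp
    obtain ⟨-, -, hab⟩ := hp
    dsimp only
    split_ifs with h
    · intro he
      obtain rfl : b = a := congrArg Prod.fst he
      exact hg (hab ▸ N.mul_mem (by tauto) (by tauto))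
    · intro he
      exact hz1 (mul_eq_right.1 (congrArg Prod.fst he))
  · rintro ⟨a, b⟩ hp
    simp only [Set.Finite.mem_toFinset, Set.mem_ofPred_eq] at hp ⊢
    obtain ⟨ha, hb, hab⟩ := hp
    split_ifs with h
    · refine ⟨hb, ha, ?_⟩
      rcases h with h | h
      · rw [← hab, hcomm a h]
      · rw [← hab, hcomm b h]
    · push Not at h
      refine ⟨hS a ha h.1, hS b hb h.2, ?_⟩
      dsimp only
      rw [mul_assoc, ← mul_assoc a, hzc, mul_assoc, hzza, hab]
  · rintro ⟨a, b⟩ _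
    by_cases h : a ∈ N ∨ b ∈ N
    · simp [h, or_comm.1 h]
    · simp [h, hmem, hzza]

theorem stmt_16 (n : ℕ) (hn : 4 ≤ n) (heven : Even n)
    (N : Subgroup (DihedralGroup n)) [N.Normal] (hNcard : Nat.card N = 2)
    (S : Set (DihedralGroup n)) (hcard : S.ncard = n - 1)
    (h : IsSumSet S ((n - 2) / 2))
    (ht2a : (S ∩ (N : Set (DihedralGroup n))).ncard = 1)
    (ht2b : ∀ g : DihedralGroup n, g ∉ N →
      (S ∩ g • (N : Set (DihedralGroup n))).ncard = 0 ∨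
        (S ∩ g • (N : Set (DihedralGroup n))).ncard = 2) :
    n % 4 = 2 := by
  have : NeZero n := ⟨by omega⟩
  obtain ⟨z, hz, hz1, hzz, hzc, hNz⟩ := exists_central_involution N hNcard
  have hS : ∀ a ∈ S, a ∉ N → z * a ∈ S := by
    intro a ha haN
    have haC : a ∈ S ∩ a • (N : Set (DihedralGroup n)) :=
      ⟨ha, Set.mem_smul_set.2 ⟨1, N.one_mem, by simp⟩⟩
    have hcoset : (a • (N : Set (DihedralGroup n))).ncard = 2 := by
      rw [Set.ncard_smul_set]
      exact hNcard
    have hfull : S ∩ a • (N : Set (DihedralGroup n)) = a • (N : Set (DihedralGroup n)) := by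
      refine Set.eq_of_subset_of_ncard_le Set.inter_subset_right ?_ (Set.toFinite _)
      rcases ht2b a haN with h0 | h2
      · rw [Set.ncard_eq_zero (Set.toFinite _)] at h0
        simp [h0] at haC
      · rw [h2, hcoset]
    have hza : z * a ∈ a • (N : Set (DihedralGroup n)) :=
      Set.mem_smul_set.2 ⟨z, hz, hzc a⟩
    rw [← hfull] at hza
    exact hza.1
  obtain ⟨g, hg⟩ : ∃ g, g ∉ N := by
    by_contra! hall
    have htop : N = ⊤ := (Subgroup.eq_top_iff' N).2 hall
    rw [htop, Subgroup.card_top, DihedralGroup.nat_card] at hNcard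
    omega
  have hev := even_sumReps N S z hz hz1 hzz hzc hNz hS g hg
  rw [h g (fun h1 ↦ hg (h1 ▸ N.one_mem))] at hev
  obtain ⟨c, hc⟩ := hev
  obtain ⟨m, rfl⟩ := heven
  omega
end

section
/- Let G be a finite group with a normal subgroup K and a subgroup H such that K ∩ H = {1}, KH = G, and H acts regularly by conjugation on the nonidentity elements of K (for all nonidentity a, b ∈ K there is a unique h ∈ H with h^{-1}ah = b). Let k₁, …, k_t be t distinct nonidentity elements of K and set S = k₁H ∪ ⋯ ∪ k_tH (a union of t left cosets of H none of which equals H). Then S is a (|G|, t·|H|, t² − t, t²) partial sum set in G, and S ∪ H is a (|G|, (t+1)·|H|, t² + |H|, t² + t) partial sum set in G. -/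
/-!
Every element of `G` is uniquely `k * h` with `k ∈ K`, `h ∈ H`, so for a finite set `T ⊆ K` the
union of cosets `T * H` consists of the elements whose `K`-component lies in `T`. Let `g` have
`K`-component `k`. A representation `g = x * y` is determined by `x = a * h`, and `y ∈ T * H` exactly
when `h⁻¹ * (a⁻¹ * k) * h ∈ T`. For `a ≠ k`, regularity makes `h ↦ h⁻¹ * (a⁻¹ * k) * h` a bijection
from `H` onto `K \ {1}`, so `#(T \ {1})` values of `h` qualify; for `a = k` either every `h` qualifies
or none does, according to whether `1 ∈ T`. Hence the number of representations is
`#(T \ {k}) * #(T \ {1})`, plus `|H|` when both `k` and `1` lie in `T` (`sumReps_mul`). The two claims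
are the cases `T = {κ i}` and `T = {κ i} ∪ {1}`.
-/

open scoped Pointwise

open Classical in
/-- Regularity of the action: for `c ∈ K` with `c ≠ 1`, conjugation maps `H` bijectively onto the
nonidentity elements of `K`. -/
lemma card_conj_mem {G : Type*} [Group G] [Fintype G]
    (K H : Subgroup G) [K.Normal]
    (hreg : ∀ a b : G, a ∈ K → b ∈ K → a ≠ 1 → b ≠ 1 →
      ∃! h : G, h ∈ H ∧ h⁻¹ * a * h = b)
    (T : Finset G) (hT : ∀ a ∈ T, a ∈ K) (c : G) (hc : c ∈ K) (hc1 : c ≠ 1) :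
    (Finset.univ.filter (fun h : G => h ∈ H ∧ h⁻¹ * c * h ∈ T)).card = (T.erase 1).card := by
  have hne : ∀ h : G, h⁻¹ * c * h ≠ 1 := by
    intro h hh
    apply hc1
    have : c = h * (h⁻¹ * c * h) * h⁻¹ := by group
    rw [this, hh]; group
  refine Finset.card_bij (fun h _ => h⁻¹ * c * h) ?_ ?_ ?_
  · intro h hh
    simp only [Finset.mem_filter, Finset.mem_univ, true_and] at hh
    exact Finset.mem_erase.2 ⟨hne h, hh.2⟩
  · intro h hh h' hh' e
    simp only [Finset.mem_filter, Finset.mem_univ, true_and] at hh hh'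
    exact (hreg c _ hc (hT _ hh'.2) hc1 (hne h')).unique ⟨hh.1, e⟩ ⟨hh'.1, rfl⟩
  · intro b hb
    obtain ⟨hb1, hbT⟩ := Finset.mem_erase.1 hb
    obtain ⟨h, ⟨hH, e⟩, -⟩ := hreg c b hc (hT b hbT) hc1 hb1
    exact ⟨h, by simp [hH, e, hbT], e⟩

/-- Uniqueness of the `K`-component. -/
lemma left_eq_of_mul_eq {G : Type*} [Group G] {K H : Subgroup G} (hKH : K ⊓ H = ⊥)
    {a b h h' : G} (ha : a ∈ K) (hb : b ∈ K) (hh : h ∈ H) (hh' : h' ∈ H)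
    (e : a * h = b * h') : a = b := by
  have e2 : b⁻¹ * a = h' * h⁻¹ := by
    rw [eq_mul_inv_iff_mul_eq, mul_assoc, e]; group
  have : b⁻¹ * a ∈ K ⊓ H :=
    ⟨K.mul_mem (K.inv_mem hb) ha, e2 ▸ H.mul_mem hh' (H.inv_mem hh)⟩
  rw [hKH, Subgroup.mem_bot] at this
  exact (inv_mul_eq_one.1 this).symm

lemma mul_mem_mul_iff {G : Type*} [Group G] {K H : Subgroup G} (hKH : K ⊓ H = ⊥)
    {T : Finset G} (hT : ∀ a ∈ T, a ∈ K) {k h : G} (hk : k ∈ K) (hh : h ∈ H) :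
    k * h ∈ (T : Set G) * (H : Set G) ↔ k ∈ T := by
  constructor
  · rintro ⟨a, ha, h', hh', e⟩
    rw [← left_eq_of_mul_eq hKH (hT a ha) hk hh' hh e]
    exact ha
  · exact fun hkT => ⟨k, hkT, h, hh, rfl⟩

lemma ncard_mul {G : Type*} [Group G] {K H : Subgroup G} (hKH : K ⊓ H = ⊥)
    {T : Finset G} (hT : ∀ a ∈ T, a ∈ K) :
    ((T : Set G) * (H : Set G)).ncard = T.card * Nat.card H := by
  rw [← Set.image_mul_prod, Set.InjOn.ncard_image, Set.ncard_prod, Set.ncard_coe_finset]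
  · rfl
  · rintro ⟨a, h⟩ ⟨ha, hh⟩ ⟨b, h'⟩ ⟨hb, hh'⟩ e
    obtain rfl := left_eq_of_mul_eq hKH (hT a ha) (hT b hb) hh hh' e
    exact Prod.ext rfl (mul_left_cancel e)

open Classical in
/-- The number of representations of `k * h₀` over a union `T * H` of left cosets of `H`. -/
lemma sumReps_mul {G : Type*} [Group G] [Finite G]
    (K H : Subgroup G) [K.Normal] (hKH : K ⊓ H = ⊥)
    (hreg : ∀ a b : G, a ∈ K → b ∈ K → a ≠ 1 → b ≠ 1 →
      ∃! h : G, h ∈ H ∧ h⁻¹ * a * h = b)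
    (T : Finset G) (hT : ∀ a ∈ T, a ∈ K) (k h₀ : G) (hk : k ∈ K) (hh₀ : h₀ ∈ H) :
    sumReps ((T : Set G) * (H : Set G)) (k * h₀) =
      (if k ∈ T ∧ 1 ∈ T then Nat.card H else 0) + (T.erase k).card * (T.erase 1).card := by
  have := Fintype.ofFinite G
  have key : {p : G × G | p.1 ∈ (T : Set G) * (H : Set G) ∧ p.2 ∈ (T : Set G) * (H : Set G) ∧
      p.1 * p.2 = k * h₀} =
      (fun q : (_ : G) × G => (q.1 * q.2, (q.1 * q.2)⁻¹ * (k * h₀))) ''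
        (T.sigma (fun a => Finset.univ.filter
          (fun h : G => h ∈ H ∧ h⁻¹ * (a⁻¹ * k) * h ∈ T)) : Finset ((_ : G) × G)) := by
    -- The `K`-component of `(a * h)⁻¹ * (k * h₀)` is the conjugate `h⁻¹ * (a⁻¹ * k) * h`.
    have hmem : ∀ a ∈ T, ∀ h ∈ H, ((a * h)⁻¹ * (k * h₀) ∈ (T : Set G) * (H : Set G) ↔
        h⁻¹ * (a⁻¹ * k) * h ∈ T) := by
      intro a ha h hh
      have e : (a * h)⁻¹ * (k * h₀) = (h⁻¹ * (a⁻¹ * k) * h) * (h⁻¹ * h₀) := by group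
      rw [e]
      refine mul_mem_mul_iff hKH hT ?_ (H.mul_mem (H.inv_mem hh) hh₀)
      have := ‹K.Normal›.conj_mem _ (K.mul_mem (K.inv_mem (hT a ha)) hk) h⁻¹
      simpa using this
    ext ⟨x, y⟩
    simp only [Set.mem_ofPred_eq, Set.mem_image, Finset.mem_coe, Finset.mem_sigma,
      Finset.mem_filter, Finset.mem_univ, true_and, Prod.mk.injEq]
    constructor
    · rintro ⟨⟨a, ha, h, hh, rfl⟩, hy, e⟩
      have ey : (a * h)⁻¹ * (k * h₀) = y := by rw [← e]; exact inv_mul_cancel_left _ _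
      exact ⟨⟨a, h⟩, ⟨ha, hh, (hmem a ha h hh).1 (ey ▸ hy)⟩, rfl, ey⟩
    · rintro ⟨⟨a, h⟩, ⟨ha, hh, hc⟩, rfl, rfl⟩
      exact ⟨⟨a, ha, h, hh, rfl⟩, (hmem a ha h hh).2 hc, mul_inv_cancel_left _ _⟩
  rw [sumReps, key, Set.InjOn.ncard_image, Set.ncard_coe_finset, Finset.card_sigma]
  · have hne : ∀ a ∈ T.erase k, (Finset.univ.filter
        (fun h : G => h ∈ H ∧ h⁻¹ * (a⁻¹ * k) * h ∈ T)).card = (T.erase 1).card := by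
      intro a ha
      obtain ⟨hak, haT⟩ := Finset.mem_erase.1 ha
      exact card_conj_mem K H hreg T hT _ (K.mul_mem (K.inv_mem (hT a haT)) hk)
        (fun h => hak (inv_mul_eq_one.1 h))
    have hcard : (Finset.univ.filter (fun h : G => h ∈ H)).card = Nat.card H := by
      rw [Nat.card_eq_fintype_card, Fintype.card_subtype]
    by_cases hkT : k ∈ T
    · rw [← Finset.add_sum_erase _ _ hkT, Finset.sum_congr rfl hne, Finset.sum_const,
        smul_eq_mul]
      congr 1
      by_cases h1 : (1 : G) ∈ T <;> simp [hkT, h1, hcard]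
    · rw [Finset.erase_eq_of_notMem hkT] at hne ⊢
      rw [Finset.sum_congr rfl hne]
      simp [hkT]
  · rintro ⟨a, h⟩ hq ⟨b, h'⟩ hq' e
    simp only [Finset.mem_coe, Finset.mem_sigma, Finset.mem_filter, Finset.mem_univ,
      true_and] at hq hq'
    simp only [Prod.mk.injEq] at e
    obtain rfl := left_eq_of_mul_eq hKH (hT a hq.1) (hT b hq'.1) hq.2.1 hq'.2.1 e.1
    obtain rfl := mul_left_cancel e.1
    rfl

theorem stmt_18 {G : Type*} [Group G] [Finite G]
    (K H : Subgroup G) [K.Normal] (hKH : K ⊓ H = ⊥)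
    (hgen : ∀ g : G, ∃ k ∈ K, ∃ h ∈ H, k * h = g)
    (hreg : ∀ a b : G, a ∈ K → b ∈ K → a ≠ 1 → b ≠ 1 →
      ∃! h : G, h ∈ H ∧ h⁻¹ * a * h = b)
    (t : ℕ) (κ : Fin t → G) (hinj : Function.Injective κ)
    (hκ : ∀ i, κ i ∈ K ∧ κ i ≠ 1)
    (S : Set G) (hS : S = ⋃ i, κ i • (H : Set G)) :
    (S.ncard = t * Nat.card H ∧ IsPartialSumSet S (t ^ 2 - t) (t ^ 2)) ∧
      ((S ∪ (H : Set G)).ncard = (t + 1) * Nat.card H ∧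
        IsPartialSumSet (S ∪ (H : Set G)) (t ^ 2 + Nat.card H) (t ^ 2 + t)) := by
  classical
  set T : Finset G := Finset.univ.image κ with hTdef
  have hTK : ∀ a ∈ T, a ∈ K := by
    intro a ha
    obtain ⟨i, -, rfl⟩ := Finset.mem_image.1 ha
    exact (hκ i).1
  have h1T : (1 : G) ∉ T := by
    intro h
    obtain ⟨i, -, hi⟩ := Finset.mem_image.1 h
    exact (hκ i).2 hi
  have hTc : T.card = t := by
    rw [hTdef, Finset.card_image_of_injective _ hinj, Finset.card_univ, Fintype.card_fin]
  have hST : S = (T : Set G) * (H : Set G) := by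
    rw [hS]
    ext x
    simp [hTdef, Set.mem_mul, Set.mem_smul_set]
  have hSU : S ∪ (H : Set G) = ((insert 1 T : Finset G) : Set G) * (H : Set G) := by
    rw [hST, Finset.coe_insert, Set.insert_eq, Set.union_mul, Set.singleton_mul, Set.union_comm]
    simp
  have hT'K : ∀ a ∈ insert 1 T, a ∈ K := by
    intro a ha
    rcases Finset.mem_insert.1 ha with rfl | ha
    · exact K.one_mem
    · exact hTK a ha
  have hT'c : (insert 1 T).card = t + 1 := by rw [Finset.card_insert_of_notMem h1T, hTc]
  rw [hSU, hST]
  refine ⟨⟨by rw [ncard_mul hKH hTK, hTc], ?_, ?_⟩, ⟨by rw [ncard_mul hKH hT'K, hT'c], ?_, ?_⟩⟩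
  · intro g hg _
    obtain ⟨k, hk, h, hh, rfl⟩ := hgen g
    rw [mul_mem_mul_iff hKH hTK hk hh] at hg
    rw [sumReps_mul K H hKH hreg T hTK k h hk hh, if_neg (fun h => h1T h.2),
      Finset.card_erase_of_mem hg, Finset.erase_eq_of_notMem h1T, hTc, zero_add,
      Nat.sub_mul, one_mul, sq]
  · intro g hg _
    obtain ⟨k, hk, h, hh, rfl⟩ := hgen g
    rw [mul_mem_mul_iff hKH hTK hk hh] at hg
    rw [sumReps_mul K H hKH hreg T hTK k h hk hh, if_neg (fun h => h1T h.2),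
      Finset.erase_eq_of_notMem hg, Finset.erase_eq_of_notMem h1T, hTc, zero_add, sq]
  · intro g hg _
    obtain ⟨k, hk, h, hh, rfl⟩ := hgen g
    rw [mul_mem_mul_iff hKH hT'K hk hh] at hg
    rw [sumReps_mul K H hKH hreg _ hT'K k h hk hh, if_pos ⟨hg, Finset.mem_insert_self _ _⟩,
      Finset.card_erase_of_mem hg, Finset.erase_insert h1T, hT'c, hTc, Nat.add_sub_cancel,
      sq, add_comm]
  · intro g hg _
    obtain ⟨k, hk, h, hh, rfl⟩ := hgen g
    rw [mul_mem_mul_iff hKH hT'K hk hh] at hg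
    rw [sumReps_mul K H hKH hreg _ hT'K k h hk hh, if_neg (fun h => hg h.1),
      Finset.erase_eq_of_notMem hg, Finset.erase_insert h1T, hT'c, hTc]
    ring
end
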